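/- arXiv:2206.07561 — 7 statements merged into one kernel-verified Lean document; each statement's English description precedes it below -/
import Mathlib

section
/- Let (X1,d1) and (X2,d2) be finite metric spaces and let (X1×X2, d1⊗d2) be their direct product. Then (X1×X2, d1⊗d2) is hypermetric if and only if both (X1,d1) and (X2,d2) are hypermetric. -/
/-!
Hypermetricity is stable under pullback along any map `f : X → Y` (`Hypermetric.comp`), since
the quadratic form of `d ∘ (f × f)` at a weight `w` is that of `d` at the pushforward of `w`,
which has the same total mass; it is also stable under sums (`Hypermetric.add`). The product
distance is the sum of the pullbacks of the two distances along the projections. Conversely, each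
factor's distance is the pullback of the product distance along a slice `a ↦ (a, b)`
or `b ↦ (a, b)`.
-/

open scoped BigOperators

/-- A metric (distance function) `d` on `X` is hypermetric if for every finitely supported
function `w : X → ℤ` with `∑ x, w x = 1` one has `∑ x, ∑ y, w x * w y * d x y ≤ 0`. -/
def Hypermetric {X : Type*} (d : X → X → ℝ) : Prop :=
  ∀ w : X → ℤ, (Function.support w).Finite → (∑ᶠ x, w x) = 1 →
    (∑ᶠ x, ∑ᶠ y, (w x : ℝ) * (w y : ℝ) * d x y) ≤ 0

theorem hypermetric_iff_of_fintype {X : Type*} [Fintype X] (d : X → X → ℝ) :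
    Hypermetric d ↔ ∀ w : X → ℤ, ∑ x, w x = 1 →
      ∑ x, ∑ y, (w x : ℝ) * (w y : ℝ) * d x y ≤ 0 := by
  simp only [Hypermetric, finsum_eq_sum_of_fintype, Set.toFinite, forall_const]

theorem Hypermetric.add {X : Type*} [Fintype X] {d e : X → X → ℝ}
    (hd : Hypermetric d) (he : Hypermetric e) : Hypermetric fun x y => d x y + e x y := by
  rw [hypermetric_iff_of_fintype] at *
  intro w hw
  simp only [mul_add, Finset.sum_add_distrib]
  exact add_nonpos (hd w hw) (he w hw)

open Classical in
theorem Hypermetric.comp {X Y : Type*} [Fintype X] [Fintype Y] {d : Y → Y → ℝ}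
    (hd : Hypermetric d) (f : X → Y) : Hypermetric fun x y => d (f x) (f y) := by
  rw [hypermetric_iff_of_fintype] at *
  intro w hw
  -- `v` is the pushforward of `w` along `f`.
  let v : Y → ℤ := fun y => ∑ x with f x = y, w x
  have hv : ∀ g : Y → ℝ, ∑ y, (v y : ℝ) * g y = ∑ x, (w x : ℝ) * g (f x) := by
    intro g
    rw [← Finset.sum_fiberwise Finset.univ f]
    refine Finset.sum_congr rfl fun y _ => ?_
    simp only [v, Int.cast_sum, Finset.sum_mul]
    refine Finset.sum_congr rfl fun x hx => ?_
    rw [(Finset.mem_filter.mp hx).2]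
  have h := hd v ((Finset.sum_fiberwise Finset.univ f w).trans hw)
  simp only [mul_assoc, ← Finset.mul_sum] at h ⊢
  simpa only [hv] using h

/-- The direct product of two finite metric spaces, with distance
`(d₁ ⊗ d₂)((x₁,x₂),(y₁,y₂)) = d₁(x₁,y₁) + d₂(x₂,y₂)`, is hypermetric if and only if
both factors are hypermetric. -/
theorem hypermetric_directProd_iff {X1 X2 : Type*} [Fintype X1] [Fintype X2]
    [Nonempty X1] [Nonempty X2] [MetricSpace X1] [MetricSpace X2] :
    Hypermetric (fun p q : X1 × X2 => dist p.1 q.1 + dist p.2 q.2) ↔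
      (Hypermetric fun a b : X1 => dist a b) ∧ (Hypermetric fun a b : X2 => dist a b) := by
  constructor
  · intro h
    obtain ⟨a⟩ := ‹Nonempty X1›
    obtain ⟨b⟩ := ‹Nonempty X2›
    exact ⟨by simpa using h.comp fun x : X1 => (x, b), by simpa using h.comp fun y : X2 => (a, y)⟩
  · rintro ⟨h1, h2⟩
    exact (h1.comp Prod.fst).add (h2.comp Prod.snd)
end

section
/- Let G be a finite connected simple graph on n ≥ 2 vertices such that for every block B of G (every maximal connected subgraph of G having no cut vertex), the metric space given by the vertex set of B with the path metric of B is of negative type. Then the distance matrix D(G) has exactly one positive eigenvalue, i.e., exactly one of its n real eigenvalues (counted with multiplicity) is strictly positive. -/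
/-!
The quadratic form `w ↦ ∑ x, ∑ y, w x * w y * dist x y` is shown to be nonpositive on real weights
of total mass zero. Given this, two positive eigenvalues are impossible, since some nonzero
combination of two orthonormal eigenvectors has mass zero (`eigenvalues_pos_unique`); and the
distance matrix is nonzero with zero trace, so at least one eigenvalue is positive.

Nonpositivity is proved by induction on vertex sets `S` that are block-closed (`IsBlockClosed`):
`G` retracts onto `S`, so that `S` is connected and isometric in `G`, and `S` contains every
connected set without cut vertex that meets it in two vertices. If `G.induce S` has no cut vertex
and at least two vertices, `S` is a block and the hypothesis applies, after passing from integer to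
real weights by rounding (`NegativeType.kernelForm_nonpos`). Otherwise a cut vertex `v` splits `S`
into smaller block-closed sets `A` and `B` meeting in `v`. Distances from `A` to `B` are additive
through `v`, and this makes the form the orthogonal sum of the forms on `A` and on `B`
(`IsSplit.kernelForm_nonpos`).
-/

open scoped BigOperators

/-- A metric (distance function) `d` on `X` is of negative type if for every finitely
supported function `w : X → ℤ` with `∑ x, w x = 0` one has
`∑ x, ∑ y, w x * w y * d x y ≤ 0`. -/
def NegativeType {X : Type*} (d : X → X → ℝ) : Prop :=
  ∀ w : X → ℤ, (Function.support w).Finite → (∑ᶠ x, w x) = 0 →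
    (∑ᶠ x, ∑ᶠ y, (w x : ℝ) * (w y : ℝ) * d x y) ≤ 0

/-- A vertex `v` of a graph `H` is a cut vertex if there are two vertices, both different
from `v`, that are connected in `H` but are disconnected after deleting `v`. -/
def IsCutVertex {W : Type*} (H : SimpleGraph W) (v : W) : Prop :=
  ∃ a b : {w : W // w ≠ v}, H.Reachable a.1 b.1 ∧
    ¬ (H.induce {w : W | w ≠ v}).Reachable ⟨a.1, a.2⟩ ⟨b.1, b.2⟩

/-- A set of vertices `B` is a block of `G` if it induces a maximal connected subgraph
of `G` having no cut vertex. -/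
def IsBlock {V : Type*} (G : SimpleGraph V) (B : Set V) : Prop :=
  B.Nonempty ∧ (G.induce B).Connected ∧ (∀ v : B, ¬ IsCutVertex (G.induce B) v) ∧
    ∀ C : Set V, B ⊆ C → (G.induce C).Connected →
      (∀ v : C, ¬ IsCutVertex (G.induce C) v) → B = C

/-! ### Quadratic forms and negative type over the reals -/

/-- The bilinear form `∑ x, ∑ y, f x * g y * d x y` attached to a kernel `d`. -/
noncomputable def kernelForm {X : Type*} [Fintype X] (d : X → X → ℝ) (f g : X → ℝ) : ℝ :=
  ∑ x, ∑ y, f x * g y * d x y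

/-- Negative type, stated with integer weights, self-improves to real weights: a real weight `w`
of total mass zero is the limit of `u N / N`, where `u N` is the integer weight `⌊N * w⌋`
corrected at one point so as to have total mass zero. -/
lemma NegativeType.kernelForm_nonpos {X : Type*} [Fintype X] {d : X → X → ℝ}
    (h : NegativeType d) (w : X → ℝ) (hw : ∑ x, w x = 0) : kernelForm d w w ≤ 0 := by
  classical
  rcases isEmpty_or_nonempty X with hX | ⟨⟨b⟩⟩
  · simp [kernelForm]
  let u : ℕ → X → ℤ := fun N x =>
    ⌊(N : ℝ) * w x⌋ - if x = b then ∑ y, ⌊(N : ℝ) * w y⌋ else 0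
  have hfloor : ∀ c : ℝ,
      Filter.Tendsto (fun N : ℕ => ((⌊(N : ℝ) * c⌋ : ℤ) : ℝ) / N) Filter.atTop (nhds c) := by
    intro c
    have hlow : Filter.Tendsto (fun N : ℕ => c - 1 / (N : ℝ)) Filter.atTop (nhds c) := by
      simpa using (tendsto_const_nhds (x := c)).sub
        (tendsto_one_div_atTop_nhds_zero_nat (𝕜 := ℝ))
    refine tendsto_of_tendsto_of_tendsto_of_le_of_le' hlow tendsto_const_nhds ?_ ?_
    · filter_upwards [Filter.eventually_gt_atTop 0] with N hN
      have hN' : (0 : ℝ) < N := by exact_mod_cast hN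
      rw [le_div_iff₀ hN', sub_mul, one_div, inv_mul_cancel₀ hN'.ne']
      linarith [Int.sub_one_lt_floor ((N : ℝ) * c)]
    · filter_upwards [Filter.eventually_gt_atTop 0] with N hN
      have hN' : (0 : ℝ) < N := by exact_mod_cast hN
      rw [div_le_iff₀ hN']
      linarith [Int.floor_le ((N : ℝ) * c)]
  have hu : ∀ x, Filter.Tendsto (fun N : ℕ => (u N x : ℝ) / N) Filter.atTop (nhds (w x)) := by
    intro x
    have h2 : Filter.Tendsto (fun N : ℕ => ∑ y, ((⌊(N : ℝ) * w y⌋ : ℤ) : ℝ) / N)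
        Filter.atTop (nhds 0) := by
      rw [← hw]
      exact tendsto_finsetSum _ fun y _ => hfloor (w y)
    by_cases hx : x = b
    · have h3 := (hfloor (w b)).sub h2
      rw [sub_zero] at h3
      simpa [u, hx, sub_div, Finset.sum_div] using h3
    · simpa [u, hx] using hfloor (w x)
  have hlim : Filter.Tendsto (fun N : ℕ => kernelForm d (fun x => (u N x : ℝ) / N)
      (fun x => (u N x : ℝ) / N)) Filter.atTop (nhds (kernelForm d w w)) :=
    tendsto_finsetSum _ fun x _ => tendsto_finsetSum _ fun y _ =>
      ((hu x).mul (hu y)).mul tendsto_const_nhds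
  refine le_of_tendsto' hlim fun N => ?_
  have hN := h (u N) (Set.toFinite _) (by
    rw [finsum_eq_sum_of_fintype]
    simp [u, Finset.sum_sub_distrib])
  simp only [finsum_eq_sum_of_fintype] at hN
  have hscale : kernelForm d (fun x => (u N x : ℝ) / N) (fun x => (u N x : ℝ) / N)
      = (1 / (N : ℝ)) ^ 2 * ∑ x, ∑ y, (u N x : ℝ) * (u N y : ℝ) * d x y := by
    simp only [kernelForm, Finset.mul_sum]
    refine Finset.sum_congr rfl fun x _ => Finset.sum_congr rfl fun y _ => ?_
    ring
  rw [hscale]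
  exact mul_nonpos_of_nonneg_of_nonpos (sq_nonneg _) hN

lemma kernelForm_add_self {X : Type*} [Fintype X] {d : X → X → ℝ} (hd : ∀ x y, d x y = d y x)
    (f g : X → ℝ) : kernelForm d (fun x => f x + g x) (fun x => f x + g x)
      = kernelForm d f f + kernelForm d g g + 2 * kernelForm d f g := by
  have hcomm : kernelForm d g f = kernelForm d f g := by
    unfold kernelForm
    rw [Finset.sum_comm]
    refine Finset.sum_congr rfl fun x _ => Finset.sum_congr rfl fun y _ => ?_
    rw [hd y x]; ring
  have hexp : kernelForm d (fun x => f x + g x) (fun x => f x + g x)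
      = kernelForm d f f + kernelForm d f g + (kernelForm d g f + kernelForm d g g) := by
    simp only [kernelForm, ← Finset.sum_add_distrib]
    refine Finset.sum_congr rfl fun x _ => Finset.sum_congr rfl fun y _ => ?_
    ring
  rw [hexp, hcomm]; ring

/-! ### Retractions onto vertex sets -/

section Graph

variable {V : Type*} {G : SimpleGraph V} {S A B C : Set V} {v : V} {r : V → V}

/-- `r` is a retraction of the graph `G` onto the vertex set `S`: it fixes `S` pointwise, has
values in `S`, and maps every edge to an edge or to a single vertex. -/
structure IsGraphRetraction (G : SimpleGraph V) (S : Set V) (r : V → V) : Prop where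
  mem : ∀ x, r x ∈ S
  fix : ∀ x ∈ S, r x = x
  adj : ∀ x y, G.Adj x y → r x = r y ∨ G.Adj (r x) (r y)

lemma IsGraphRetraction.exists_walk (hr : IsGraphRetraction G S r) {x y : V} (p : G.Walk x y) :
    ∃ q : (G.induce S).Walk ⟨r x, hr.mem x⟩ ⟨r y, hr.mem y⟩, q.length ≤ p.length := by
  induction p with
  | nil => exact ⟨.nil, le_rfl⟩
  | @cons x z y h p ih =>
    obtain ⟨q, hq⟩ := ih
    rcases hr.adj x z h with he | ha
    · have he' : (⟨r x, hr.mem x⟩ : S) = ⟨r z, hr.mem z⟩ := Subtype.ext he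
      rw [he']
      exact ⟨q, by simp; omega⟩
    · have ha' : (G.induce S).Adj ⟨r x, hr.mem x⟩ ⟨r z, hr.mem z⟩ := ha
      exact ⟨.cons ha' q, by simp; omega⟩

lemma IsGraphRetraction.induce_connected (hr : IsGraphRetraction G S r) (hG : G.Connected) :
    (G.induce S).Connected := by
  obtain ⟨x⟩ := hG.nonempty
  have : Nonempty S := ⟨⟨r x, hr.mem x⟩⟩
  refine ⟨fun a b => ?_⟩
  obtain ⟨p⟩ := hG.preconnected a.1 b.1
  obtain ⟨q, -⟩ := hr.exists_walk p
  have ha : (⟨r a.1, hr.mem _⟩ : S) = a := Subtype.ext (hr.fix _ a.2)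
  have hb : (⟨r b.1, hr.mem _⟩ : S) = b := Subtype.ext (hr.fix _ b.2)
  rw [ha, hb] at q
  exact ⟨q⟩

/-- The set `S` is isometrically embedded when `G` retracts onto it. -/
lemma IsGraphRetraction.dist_induce (hr : IsGraphRetraction G S r) (hG : G.Connected) (a b : S) :
    (G.induce S).dist a b = G.dist a.1 b.1 := by
  apply le_antisymm
  · obtain ⟨p, hp⟩ := hG.exists_walk_length_eq_dist a.1 b.1
    obtain ⟨q, hq⟩ := hr.exists_walk p
    have ha : (⟨r a.1, hr.mem _⟩ : S) = a := Subtype.ext (hr.fix _ a.2)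
    have hb : (⟨r b.1, hr.mem _⟩ : S) = b := Subtype.ext (hr.fix _ b.2)
    have hle := (SimpleGraph.dist_le q).trans hq
    rw [ha, hb] at hle
    omega
  · obtain ⟨p, hp⟩ := (hr.induce_connected hG).exists_walk_length_eq_dist a b
    have := SimpleGraph.dist_le (p.map (SimpleGraph.Embedding.induce S).toHom)
    rw [SimpleGraph.Walk.length_map, hp] at this
    exact this

lemma IsGraphRetraction.dist_le_length (hr : IsGraphRetraction G S r) (hG : G.Connected)
    {x y : V} (p : G.Walk x y) : G.dist (r x) (r y) ≤ p.length := by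
  obtain ⟨q, hq⟩ := hr.exists_walk p
  have h1 := SimpleGraph.dist_le q
  rw [hr.dist_induce hG] at h1
  exact h1.trans hq

/-! ### Splitting a vertex set at a cut vertex -/

/-- `S` is the union of `A` and `B`, which share only the vertex `v`, and no edge joins
`A \ {v}` to `B \ {v}`. -/
structure IsSplit (G : SimpleGraph V) (S A B : Set V) (v : V) : Prop where
  union : A ∪ B = S
  inter : A ∩ B = {v}
  adj : ∀ a ∈ A, ∀ b ∈ B, G.Adj a b → a = v ∨ b = v

namespace IsSplit

lemma symm (h : IsSplit G S A B v) : IsSplit G S B A v where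
  union := by rw [Set.union_comm, h.union]
  inter := by rw [Set.inter_comm, h.inter]
  adj := fun b hb a ha hab => (h.adj a ha b hb hab.symm).symm

lemma mem_left (h : IsSplit G S A B v) : v ∈ A :=
  (h.inter.symm ▸ Set.mem_singleton v : v ∈ A ∩ B).1

lemma mem_right (h : IsSplit G S A B v) : v ∈ B := h.symm.mem_left

lemma eq_of_mem (h : IsSplit G S A B v) {x : V} (ha : x ∈ A) (hb : x ∈ B) : x = v :=
  (h.inter ▸ (⟨ha, hb⟩ : x ∈ A ∩ B) : x ∈ ({v} : Set V))

lemma subset_left (h : IsSplit G S A B v) : A ⊆ S := h.union ▸ Set.subset_union_left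

lemma mem_or (h : IsSplit G S A B v) {x : V} (hx : x ∈ S) : x ∈ A ∨ x ∈ B :=
  (h.union.symm ▸ hx : x ∈ A ∪ B)

/-- Collapsing `B` to `v` turns a retraction onto `S` into one onto `A`. -/
lemma retraction (h : IsSplit G S A B v) (hr : IsGraphRetraction G S r) :
    ∃ r', IsGraphRetraction G A r' := by
  classical
  refine ⟨fun x => if r x ∈ A then r x else v, ?_, ?_, ?_⟩
  · intro x
    split_ifs with hx
    exacts [hx, h.mem_left]
  · intro x hx
    have := hr.fix x (h.subset_left hx)
    simp [this, hx]
  · intro x y hxy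
    rcases hr.adj x y hxy with he | ha
    · left; simp [he]
    · by_cases hx : r x ∈ A <;> by_cases hy : r y ∈ A
      · right; simpa [hx, hy] using ha
      · left
        have hyB := (h.mem_or (hr.mem y)).resolve_left hy
        rcases h.adj _ hx _ hyB ha with e | e
        · simp [hy, e, h.mem_left]
        · exact absurd (e ▸ h.mem_left) hy
      · left
        have hxB := (h.mem_or (hr.mem x)).resolve_left hx
        rcases h.adj _ hy _ hxB ha.symm with e | e
        · simp [hx, e, h.mem_left]
        · exact absurd (e ▸ h.mem_left) hx
      · left; simp [hx, hy]

/-- The image under `r` of a walk, if it leads from `A` to `B`, passes through `v`, and it is no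
longer than the walk itself. -/
lemma dist_add_dist_le_length (h : IsSplit G S A B v) (hr : IsGraphRetraction G S r)
    (hG : G.Connected) {x y : V} (p : G.Walk x y) (hx : r x ∈ A) (hy : r y ∈ B) :
    G.dist (r x) v + G.dist v (r y) ≤ p.length := by
  induction p with
  | nil =>
    rw [h.eq_of_mem hx hy]
    simp
  | @cons x z y hxz p ih =>
    by_cases hz : r z ∈ A
    · have h1 := ih hz hy
      have h2 : G.dist (r x) (r z) ≤ 1 := by
        simpa using hr.dist_le_length hG (SimpleGraph.Walk.cons hxz .nil)
      have h3 := hG.dist_triangle (u := r x) (v := r z) (w := v)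
      simp only [SimpleGraph.Walk.length_cons]
      omega
    · have hzB := (h.mem_or (hr.mem z)).resolve_left hz
      have hxv : r x = v := by
        rcases hr.adj x z hxz with e | e
        · exact absurd (e ▸ hx) hz
        · rcases h.adj _ hx _ hzB e with e | e
          · exact e
          · exact absurd (e ▸ h.mem_left) hz
      have h1 := hr.dist_le_length hG (SimpleGraph.Walk.cons hxz p)
      rw [hxv] at h1 ⊢
      simpa using h1

lemma dist_eq (h : IsSplit G S A B v) (hr : IsGraphRetraction G S r) (hG : G.Connected)
    {a b : V} (ha : a ∈ A) (hb : b ∈ B) : G.dist a b = G.dist a v + G.dist v b := by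
  have ra := hr.fix a (h.subset_left ha)
  have rb := hr.fix b (h.symm.subset_left hb)
  obtain ⟨p, hp⟩ := hG.exists_walk_length_eq_dist a b
  have h1 := h.dist_add_dist_le_length hr hG p (by rwa [ra]) (by rwa [rb])
  rw [ra, rb] at h1
  exact le_antisymm hG.dist_triangle (hp ▸ h1)

end IsSplit

/-- A property preserved along edges is preserved by reachability. -/
lemma reachable_induction {W : Type*} {H : SimpleGraph W} {P : W → Prop}
    (hP : ∀ x y, H.Adj x y → P x → P y) {x y : W} (h : H.Reachable x y) (hx : P x) : P y := by
  obtain ⟨p⟩ := h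
  induction p with
  | nil => exact hx
  | cons h p ih => exact ih (hP _ _ h hx)

/-- A connected set without cut vertex that meets `A` in two vertices lies on the `A`-side of any
splitting. -/
lemma IsSplit.subset_left_of_biconnected (h : IsSplit G S A B v) (hCS : C ⊆ S)
    (hC : (G.induce C).Connected) (hcut : ∀ x : C, ¬ IsCutVertex (G.induce C) x)
    (hnt : (C ∩ A).Nontrivial) : C ⊆ A := by
  obtain ⟨a, ⟨haC, haA⟩, hav⟩ := hnt.exists_ne v
  intro c hcC
  by_contra hcA
  have hcv : c ≠ v := fun e => hcA (e ▸ h.mem_left)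
  by_cases hvC : v ∈ C
  · have hreach : ((G.induce C).induce {w : C | w ≠ ⟨v, hvC⟩}).Reachable
        ⟨⟨a, haC⟩, fun e => hav (congrArg Subtype.val e)⟩
        ⟨⟨c, hcC⟩, fun e => hcv (congrArg Subtype.val e)⟩ := by
      by_contra hnot
      exact hcut ⟨v, hvC⟩ ⟨⟨⟨a, haC⟩, fun e => hav (congrArg Subtype.val e)⟩,
        ⟨⟨c, hcC⟩, fun e => hcv (congrArg Subtype.val e)⟩, hC.preconnected _ _, hnot⟩
    refine hcA (reachable_induction (P := fun x => x.1.1 ∈ A) ?_ hreach haA)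
    intro x y hxy hx
    have hxy' : G.Adj x.1.1 y.1.1 := hxy
    rcases h.mem_or (hCS y.1.2) with hy | hy
    · exact hy
    · rcases h.adj _ hx _ hy hxy' with e | e
      · exact absurd (Subtype.ext e) x.2
      · exact absurd (Subtype.ext e) y.2
  · refine hcA (reachable_induction (P := fun x : C => x.1 ∈ A) ?_
      (hC.preconnected ⟨a, haC⟩ ⟨c, hcC⟩) haA)
    intro x y hxy hx
    have hxy' : G.Adj x.1 y.1 := hxy
    rcases h.mem_or (hCS y.2) with hy | hy
    · exact hy
    · rcases h.adj _ hx _ hy hxy' with e | e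
      · exact absurd (e ▸ x.2) hvC
      · exact absurd (e ▸ y.2) hvC

/-- The vertex sets on which the induction runs: `G` retracts onto `S`, and `S` contains every
connected set without cut vertex that it meets in at least two vertices. Single vertices
and connected unions of blocks are the examples to keep in mind. -/
structure IsBlockClosed (G : SimpleGraph V) (S : Set V) : Prop where
  retraction : ∃ r, IsGraphRetraction G S r
  closed : ∀ C : Set V, (G.induce C).Connected → (∀ x : C, ¬ IsCutVertex (G.induce C) x) →
    (C ∩ S).Nontrivial → C ⊆ S

lemma isBlockClosed_univ (G : SimpleGraph V) : IsBlockClosed G Set.univ where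
  retraction := ⟨id, fun _ => trivial, fun _ _ => rfl, fun _ _ h => Or.inr h⟩
  closed := fun C _ _ _ => Set.subset_univ C

lemma IsBlockClosed.left (hS : IsBlockClosed G S) (h : IsSplit G S A B v) :
    IsBlockClosed G A where
  retraction := by
    obtain ⟨r, hr⟩ := hS.retraction
    exact h.retraction hr
  closed := fun C hC hcut hnt => h.subset_left_of_biconnected
    (hS.closed C hC hcut (hnt.mono (Set.inter_subset_inter_right C h.subset_left))) hC hcut hnt

lemma IsBlockClosed.isBlock (hS : IsBlockClosed G S) (hG : G.Connected) (hnt : S.Nontrivial)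
    (hcut : ∀ x : S, ¬ IsCutVertex (G.induce S) x) : IsBlock G S := by
  obtain ⟨r, hr⟩ := hS.retraction
  refine ⟨hnt.nonempty, hr.induce_connected hG, hcut, fun C hSC hC hCcut => ?_⟩
  refine hSC.antisymm (hS.closed C hC hCcut ?_)
  rwa [Set.inter_eq_right.mpr hSC]

/-- A cut vertex of `G.induce S` splits `S` into two strictly smaller sets: `A` consists of the
cut vertex and one component of the rest, `B` of everything outside that component. -/
lemma exists_isSplit_of_isCutVertex {v : S} (hv : IsCutVertex (G.induce S) v) :
    ∃ A B : Set V, IsSplit G S A B v.1 ∧ A ⊂ S ∧ B ⊂ S := by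
  obtain ⟨a, b, -, hab⟩ := hv
  let K : Set V := {x | ∃ (hx : x ∈ S) (hne : (⟨x, hx⟩ : S) ≠ v),
    ((G.induce S).induce {w : S | w ≠ v}).Reachable ⟨a.1, a.2⟩ ⟨⟨x, hx⟩, hne⟩}
  have hKS : K ⊆ S := fun x hx => hx.1
  have hvK : v.1 ∉ K := fun ⟨_, hne, _⟩ => hne rfl
  have haK : a.1.1 ∈ K := ⟨a.1.2, a.2, SimpleGraph.Reachable.refl _⟩
  have hbK : b.1.1 ∉ K := fun ⟨_, _, hr⟩ => hab hr
  have hbv : b.1.1 ≠ v.1 := fun e => b.2 (Subtype.ext e)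
  refine ⟨insert v.1 K, S \ K, ⟨?_, ?_, ?_⟩, ?_, ?_⟩
  · ext x
    simp only [Set.mem_union, Set.mem_insert_iff, Set.mem_sdiff]
    constructor
    · rintro ((rfl | hx) | hx)
      exacts [v.2, hKS hx, hx.1]
    · intro hx
      by_cases hxK : x ∈ K <;> tauto
  · ext x
    simp only [Set.mem_inter_iff, Set.mem_insert_iff, Set.mem_sdiff, Set.mem_singleton_iff]
    constructor
    · tauto
    · rintro rfl
      exact ⟨Or.inl rfl, v.2, hvK⟩
  · rintro x (rfl | ⟨hxS, hxv, hx⟩) y ⟨hyS, hyK⟩ hxy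
    · exact Or.inl rfl
    · right
      by_contra hyv
      have hyv' : (⟨y, hyS⟩ : S) ≠ v := fun e => hyv (congrArg Subtype.val e)
      refine hyK ⟨hyS, hyv', hx.trans (SimpleGraph.Adj.reachable ?_)⟩
      exact hxy
  · refine ⟨Set.insert_subset v.2 hKS, fun h => ?_⟩
    rcases h b.1.2 with e | e
    exacts [hbv e, hbK e]
  · exact ⟨Set.sdiff_subset, fun h => (h a.1.2).2 haK⟩

/-! ### Negative type of the whole graph -/

variable [Fintype V]

/-- On a split set the quadratic form decouples: moving the mass of `A \ {v}` and of `B \ {v}` onto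
`v` writes a mass-zero weight as a sum of mass-zero weights on `A` and on `B`, and the cross term
vanishes because distances between the two sides are additive through `v`. -/
lemma IsSplit.kernelForm_nonpos (h : IsSplit G S A B v) (hS : IsBlockClosed G S)
    (hG : G.Connected)
    (hA : ∀ w : V → ℝ, (∀ x ∉ A, w x = 0) → ∑ x, w x = 0 →
      kernelForm (fun x y => (G.dist x y : ℝ)) w w ≤ 0)
    (hB : ∀ w : V → ℝ, (∀ x ∉ B, w x = 0) → ∑ x, w x = 0 →
      kernelForm (fun x y => (G.dist x y : ℝ)) w w ≤ 0)
    (w : V → ℝ) (hw : ∀ x ∉ S, w x = 0) (hsum : ∑ x, w x = 0) :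
    kernelForm (fun x y => (G.dist x y : ℝ)) w w ≤ 0 := by
  classical
  obtain ⟨r, hr⟩ := hS.retraction
  let g : V → ℝ := fun x => if x ∈ A then w x else 0
  let f : V → ℝ := fun x => g x - if x = v then ∑ y, g y else 0
  let k : V → ℝ := fun x => w x - f x
  have hf0 : ∀ x ∉ A, f x = 0 := by
    intro x hx
    have hxv : x ≠ v := fun e => hx (e ▸ h.mem_left)
    simp [f, g, hx, hxv]
  have hk0 : ∀ x ∉ B, k x = 0 := by
    intro x hx
    have hxv : x ≠ v := fun e => hx (e ▸ h.mem_right)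
    by_cases hxA : x ∈ A
    · simp [k, f, g, hxA, hxv]
    · have hxS : x ∉ S := fun hxS => (h.mem_or hxS).elim hxA hx
      simp [k, f, g, hxA, hxv, hw x hxS]
  have hfs : ∑ x, f x = 0 := by simp [f, Finset.sum_sub_distrib]
  have hks : ∑ x, k x = 0 := by simp [k, Finset.sum_sub_distrib, hfs, hsum]
  have hcross : kernelForm (fun x y => (G.dist x y : ℝ)) f k = 0 := by
    have hterm : ∀ x y, f x * k y * (G.dist x y : ℝ)
        = (f x * G.dist x v) * k y + f x * (k y * G.dist v y) := by
      intro x y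
      by_cases hx : x ∈ A
      · by_cases hy : y ∈ B
        · rw [h.dist_eq hr hG hx hy]; push_cast; ring
        · simp [hk0 y hy]
      · simp [hf0 x hx]
    simp only [kernelForm, hterm, Finset.sum_add_distrib, ← Finset.mul_sum, ← Finset.sum_mul,
      hks, hfs, mul_zero, zero_mul, add_zero, Finset.sum_const_zero]
  have hwfk : w = fun x => f x + k x := by
    funext x
    simp [k]
  rw [hwfk, kernelForm_add_self (fun x y => by rw [SimpleGraph.dist_comm]), hcross]
  linarith [hA f hf0 hfs, hB k hk0 hks]

lemma IsBlockClosed.kernelForm_nonpos (hG : G.Connected)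
    (hblocks : ∀ B : Set V, IsBlock G B →
      NegativeType (fun a b : B => ((G.induce B).dist a b : ℝ)))
    (S : Set V) (hS : IsBlockClosed G S) (w : V → ℝ) (hw : ∀ x ∉ S, w x = 0)
    (hsum : ∑ x, w x = 0) : kernelForm (fun x y => (G.dist x y : ℝ)) w w ≤ 0 := by
  classical
  induction S using WellFoundedLT.induction generalizing w with
  | ind S ih =>
  by_cases hnt : S.Nontrivial
  · by_cases hcut : ∀ x : S, ¬ IsCutVertex (G.induce S) x
    · obtain ⟨r, hr⟩ := hS.retraction
      have hout : ∀ x ∉ Set.range (Subtype.val : S → V), w x = 0 := by simpa using hw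
      have h1 := (hblocks S (hS.isBlock hG hnt hcut)).kernelForm_nonpos (fun x : S => w x) (by
        rw [← hsum]
        exact Fintype.sum_of_injective _ Subtype.val_injective _ _ hout fun _ => rfl)
      refine le_of_eq_of_le (Eq.symm ?_) h1
      refine Fintype.sum_of_injective _ Subtype.val_injective _ _
        (fun x hx => by simp [hout x hx]) fun x => ?_
      refine Fintype.sum_of_injective _ Subtype.val_injective _ _
        (fun y hy => by simp [hout y hy]) fun y => ?_
      simp only [hr.dist_induce hG]
    · push Not at hcut
      obtain ⟨v, hv⟩ := hcut
      obtain ⟨A, B, hsplit, hA, hB⟩ := exists_isSplit_of_isCutVertex hv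
      exact hsplit.kernelForm_nonpos hS hG (ih A hA (hS.left hsplit))
        (ih B hB (hS.left hsplit.symm)) w hw hsum
  · -- a mass-zero weight supported on at most one point vanishes
    have hzero : ∀ x, w x = 0 := by
      intro x
      by_cases hx : x ∈ S
      · rw [← hsum]
        refine (Finset.sum_eq_single x (fun y _ hyx => hw y fun hy => ?_) (by simp)).symm
        exact hyx (Set.not_nontrivial_iff.mp hnt hy hx)
      · exact hw x hx
    simp [kernelForm, hzero]

end Graph

/-! ### Positive eigenvalues -/

open Matrix in
/-- A real symmetric matrix whose quadratic form is nonpositive on mass-zero vectors has at most one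
positive eigenvalue: otherwise a combination of two orthonormal eigenvectors has mass zero and
strictly positive value. -/
lemma eigenvalues_pos_unique {V : Type*} [Fintype V] [DecidableEq V] {D : Matrix V V ℝ}
    (hD : D.IsHermitian)
    (hneg : ∀ w : V → ℝ, ∑ x, w x = 0 → w ⬝ᵥ (D *ᵥ w) ≤ 0) {i j : V}
    (hi : 0 < hD.eigenvalues i) (hj : 0 < hD.eigenvalues j) : i = j := by
  by_contra hij
  let e : V → V → ℝ := fun i => ⇑(hD.eigenvectorBasis i)
  have he : ∀ i, D *ᵥ e i = hD.eigenvalues i • e i := hD.mulVec_eigenvectorBasis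
  have hinner : ∀ i j, e i ⬝ᵥ e j = if i = j then 1 else 0 := by
    intro i j
    have := (orthonormal_iff_ite.mp hD.eigenvectorBasis.orthonormal) i j
    rw [← this, EuclideanSpace.inner_eq_star_dotProduct]
    simp [e, dotProduct_comm]
  have hsi : ∑ x, e i x ≠ 0 := by
    intro h0
    have := hneg (e i) h0
    rw [he, dotProduct_smul, hinner] at this
    simp at this
    linarith
  set s := ∑ x, e i x
  set t := ∑ x, e j x
  have hval := hneg (t • e i - s • e j) (by
    simp only [Pi.sub_apply, Pi.smul_apply, smul_eq_mul, Finset.sum_sub_distrib, ← Finset.mul_sum]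
    exact sub_eq_zero.mpr (mul_comm t s))
  rw [mulVec_sub, mulVec_smul, mulVec_smul, he, he] at hval
  simp only [sub_dotProduct, dotProduct_sub, smul_dotProduct, dotProduct_smul, hinner, hij,
    Ne.symm hij, if_true, if_false, smul_eq_mul] at hval
  have h1 : 0 < s ^ 2 * hD.eigenvalues j := by positivity
  have h2 : 0 ≤ t ^ 2 * hD.eigenvalues i := by positivity
  nlinarith

/-- If every block of a finite connected graph `G` on at least two vertices has path metric
of negative type, then the distance matrix of `G` has exactly one positive eigenvalue. -/
theorem distanceMatrix_one_positive_eigenvalue_of_blocks_negativeType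
    {V : Type*} [Fintype V] [DecidableEq V] (G : SimpleGraph V)
    (hG : G.Connected) (hn : 2 ≤ Fintype.card V)
    (hblocks : ∀ B : Set V, IsBlock G B →
      NegativeType (fun a b : B => ((G.induce B).dist a b : ℝ)))
    (hD : (Matrix.of fun u v : V => (G.dist u v : ℝ)).IsHermitian) :
    {i : V | 0 < hD.eigenvalues i}.ncard = 1 := by
  classical
  have hneg : ∀ w : V → ℝ, ∑ x, w x = 0 →
      dotProduct w ((Matrix.of fun u v : V => (G.dist u v : ℝ)).mulVec w) ≤ 0 := by
    intro w hsum
    have h := IsBlockClosed.kernelForm_nonpos hG hblocks Set.univ (isBlockClosed_univ G) w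
      (by simp) hsum
    refine le_of_eq_of_le ?_ h
    simp only [dotProduct, Matrix.mulVec, Matrix.of_apply, kernelForm, Finset.mul_sum]
    refine Finset.sum_congr rfl fun x _ => Finset.sum_congr rfl fun y _ => ?_
    ring
  have hex : ∃ i, 0 < hD.eigenvalues i := by
    by_contra! hle
    -- the trace is zero, so nonpositive eigenvalues all vanish and the matrix itself is zero
    have htr : ∑ i, hD.eigenvalues i = 0 := by
      have h := hD.trace_eq_sum_eigenvalues
      simpa [Matrix.trace] using h.symm
    have hz : hD.eigenvalues = 0 := by
      funext i
      exact (Finset.sum_eq_zero_iff_of_nonpos fun i _ => hle i).mp htr i (Finset.mem_univ i)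
    have hD0 := hD.eigenvalues_eq_zero_iff.mp hz
    obtain ⟨x, y, hxy⟩ := Fintype.exists_pair_of_one_lt_card hn
    have h0 := congrFun (congrFun hD0 x) y
    have hpos := hG.pos_dist_of_ne hxy
    simp only [Matrix.of_apply, Matrix.zero_apply, Nat.cast_eq_zero] at h0
    omega
  obtain ⟨i, hi⟩ := hex
  rw [Set.ncard_eq_one]
  refine ⟨i, Set.ext fun j => ⟨fun hj => eigenvalues_pos_unique hD hneg hj hi, ?_⟩⟩
  rintro rfl
  exact hi
end

section
/- Let G be a finite connected simple graph on n ≥ 2 vertices whose graphic metric space (V(G), d_G) is of negative type. Then the distance matrix D(G) has exactly one positive eigenvalue, i.e., exactly one of its n real eigenvalues (counted with multiplicity) is strictly positive. -/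
/-!
Write `D` for the distance matrix and `Q x = x ⬝ᵥ D *ᵥ x` for its quadratic form. Negative type
says that `Q ≤ 0` on integer vectors with coordinate sum zero; rounding the vectors `k • x`
(correcting one fixed coordinate to keep the sum zero) and letting `k → ∞` extends this to all real
vectors with coordinate sum zero (`quadForm_nonpos`). This hyperplane has codimension one, so it
meets the span of any two orthonormal eigenvectors nontrivially, which rules out two positive
eigenvalues (`eigenvalue_unique`). Since `D` has trace zero and is nonzero, its eigenvalues sum to
zero and are not all zero, so at least one of them is positive.
-/

open scoped BigOperators

open scoped Matrix

/-- Negative type, stated for integer weights, extends to real weights with sum zero. -/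
lemma quadForm_nonpos {V : Type*} [Fintype V] [DecidableEq V] (d : V → V → ℝ)
    (hneg : NegativeType d) (x : V → ℝ) (hx : ∑ v, x v = 0) :
    x ⬝ᵥ (Matrix.of d) *ᵥ x ≤ 0 := by
  classical
  rcases isEmpty_or_nonempty V with hV | ⟨⟨o⟩⟩
  · simp [dotProduct]
  -- `y k` rounds `k • x` down; `w k` corrects the coordinate at `o` so that the sum vanishes.
  let y : ℕ → V → ℤ := fun k v => ⌊x v * k⌋
  let w : ℕ → V → ℤ := fun k v => y k v - if v = o then ∑ u, y k u else 0
  have hw : ∀ k, ∑ v, w k v = 0 := fun k => by simp [w]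
  have hQ : ∀ k, ∑ u, ∑ v, (w k u : ℝ) * (w k v : ℝ) * d u v ≤ 0 := fun k => by
    have h := hneg (w k) (Set.toFinite _) (by rw [finsum_eq_sum_of_fintype]; exact hw k)
    simpa only [finsum_eq_sum_of_fintype] using h
  have hy : ∀ v, Filter.Tendsto (fun k : ℕ => (y k v : ℝ) / k) Filter.atTop (nhds (x v)) := by
    intro v
    have h0 : Filter.Tendsto (fun k : ℕ => x v - 1 / (k : ℝ)) Filter.atTop (nhds (x v)) := by
      simpa using tendsto_const_nhds.sub (tendsto_one_div_atTop_nhds_zero_nat (𝕜 := ℝ))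
    refine tendsto_of_tendsto_of_tendsto_of_le_of_le' h0 tendsto_const_nhds ?_ ?_
    · filter_upwards [Filter.eventually_gt_atTop 0] with k hk
      have hk' : (0 : ℝ) < k := by exact_mod_cast hk
      rw [le_div_iff₀ hk', sub_mul, one_div_mul_cancel hk'.ne']
      exact (Int.sub_one_lt_floor _).le
    · filter_upwards [Filter.eventually_gt_atTop 0] with k hk
      have hk' : (0 : ℝ) < k := by exact_mod_cast hk
      rw [div_le_iff₀ hk']
      exact Int.floor_le _
  have hwx : ∀ v, Filter.Tendsto (fun k : ℕ => (w k v : ℝ) / k) Filter.atTop (nhds (x v)) := by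
    intro v
    by_cases hv : v = o
    · have h := (hy v).sub (tendsto_finsetSum Finset.univ fun u _ => hy u)
      rw [hx, sub_zero] at h
      refine h.congr fun k => ?_
      simp [w, hv, sub_div, Finset.sum_div]
    · refine (hy v).congr fun k => ?_
      simp [w, hv]
  have hlim : Filter.Tendsto
      (fun k : ℕ => ∑ u, ∑ v, ((w k u : ℝ) / k) * ((w k v : ℝ) / k) * d u v)
      Filter.atTop (nhds (∑ u, ∑ v, x u * x v * d u v)) :=
    tendsto_finsetSum _ fun u _ => tendsto_finsetSum _ fun v _ =>
      ((hwx u).mul (hwx v)).mul_const _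
  have hle : ∑ u, ∑ v, x u * x v * d u v ≤ 0 := by
    refine le_of_tendsto' hlim fun k => ?_
    have h : ∑ u, ∑ v, ((w k u : ℝ) / k) * ((w k v : ℝ) / k) * d u v
        = (∑ u, ∑ v, (w k u : ℝ) * (w k v : ℝ) * d u v) / (k * k : ℝ) := by
      simp only [Finset.sum_div]
      refine Finset.sum_congr rfl fun u _ => Finset.sum_congr rfl fun v _ => ?_
      rw [div_mul_div_comm, div_mul_eq_mul_div]
    rw [h]
    exact div_nonpos_of_nonpos_of_nonneg (hQ k) (by positivity)
  convert hle using 1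
  simp only [dotProduct, Matrix.mulVec, Matrix.of_apply, Finset.mul_sum]
  refine Finset.sum_congr rfl fun u _ => Finset.sum_congr rfl fun v _ => ?_
  ring

/-- A symmetric matrix that is negative semidefinite on the hyperplane of vectors with coordinate
sum zero has at most one positive eigenvalue. -/
lemma eigenvalue_unique {V : Type*} [Fintype V] [DecidableEq V] (A : Matrix V V ℝ)
    (hA : A.IsHermitian) (hQ : ∀ x : V → ℝ, ∑ v, x v = 0 → x ⬝ᵥ A *ᵥ x ≤ 0) {i j : V}
    (hi : 0 < hA.eigenvalues i) (hj : 0 < hA.eigenvalues j) : i = j := by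
  by_contra hij
  set a : V → ℝ := ⇑(hA.eigenvectorBasis i) with ha
  set b : V → ℝ := ⇑(hA.eigenvectorBasis j) with hb
  have hon : ∀ k l, (hA.eigenvectorBasis k : V → ℝ) ⬝ᵥ (hA.eigenvectorBasis l : V → ℝ)
      = if k = l then 1 else 0 := by
    intro k l
    have h := orthonormal_iff_ite.mp hA.eigenvectorBasis.orthonormal k l
    rw [← h, EuclideanSpace.inner_eq_star_dotProduct, dotProduct_comm]
    simp
  have haa : a ⬝ᵥ a = 1 := by simpa using hon i i
  have hbb : b ⬝ᵥ b = 1 := by simpa using hon j j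
  have hab : a ⬝ᵥ b = 0 := by simpa [hij] using hon i j
  have hba : b ⬝ᵥ a = 0 := by rw [dotProduct_comm, hab]
  have key : ∀ s t : ℝ, (s • a + t • b) ⬝ᵥ A *ᵥ (s • a + t • b)
      = s ^ 2 * hA.eigenvalues i + t ^ 2 * hA.eigenvalues j := by
    intro s t
    rw [Matrix.mulVec_add, Matrix.mulVec_smul, Matrix.mulVec_smul, ha, hb,
      hA.mulVec_eigenvectorBasis, hA.mulVec_eigenvectorBasis, ← ha, ← hb]
    simp only [add_dotProduct, dotProduct_add, smul_dotProduct, dotProduct_smul, haa, hbb, hab,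
      hba, smul_eq_mul]
    ring
  have hsum : ∀ s t : ℝ, ∑ v, (s • a + t • b) v = s * ∑ v, a v + t * ∑ v, b v := by
    intro s t
    simp [Finset.sum_add_distrib, Finset.mul_sum]
  by_cases h0 : ∑ v, a v = 0
  · have h := hQ ((1 : ℝ) • a + (0 : ℝ) • b) (by rw [hsum, h0]; ring)
    rw [key] at h
    linarith
  · have h := hQ ((∑ v, b v) • a + (-∑ v, a v) • b) (by rw [hsum]; ring)
    rw [key] at h
    have h1 : 0 < (-∑ v, a v) ^ 2 * hA.eigenvalues j := by
      have : (-∑ v, a v) ≠ 0 := neg_ne_zero.mpr h0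
      positivity
    have h2 : 0 ≤ (∑ v, b v) ^ 2 * hA.eigenvalues i := by positivity
    linarith

/-- If the graphic metric space of a finite connected graph `G` on at least two vertices
is of negative type, then the distance matrix of `G` has exactly one positive eigenvalue. -/
theorem distanceMatrix_one_positive_eigenvalue_of_negativeType
    {V : Type*} [Fintype V] [DecidableEq V] (G : SimpleGraph V)
    (hG : G.Connected) (hn : 2 ≤ Fintype.card V)
    (hneg : NegativeType (fun a b : V => (G.dist a b : ℝ)))
    (hD : (Matrix.of fun u v : V => (G.dist u v : ℝ)).IsHermitian) :
    {i : V | 0 < hD.eigenvalues i}.ncard = 1 := by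
  have hex : ∃ i, 0 < hD.eigenvalues i := by
    by_contra! hle
    have htr : ∑ i, hD.eigenvalues i = 0 := by
      have h := hD.trace_eq_sum_eigenvalues
      simpa [Matrix.trace] using h.symm
    have hz : hD.eigenvalues = 0 := by
      funext i
      exact (Finset.sum_eq_zero_iff_of_nonpos fun i _ => hle i).mp htr i (Finset.mem_univ i)
    have hzero := hD.eigenvalues_eq_zero_iff.mp hz
    obtain ⟨u, v, huv⟩ := Fintype.exists_pair_of_one_lt_card (by omega : 1 < Fintype.card V)
    have h : (G.dist u v : ℝ) = 0 := congrFun (congrFun hzero u) v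
    exact (hG.pos_dist_of_ne huv).ne' (by exact_mod_cast h)
  obtain ⟨i, hi⟩ := hex
  rw [Set.ncard_eq_one]
  refine ⟨i, Set.eq_singleton_iff_unique_mem.mpr ⟨hi, fun j hj => ?_⟩⟩
  exact eigenvalue_unique _ hD (quadForm_nonpos _ hneg) hj hi
end

section
/- Let G be a block graph on n vertices. Then the coefficients of the distance characteristic polynomial of G satisfy (−1)^{n−1} c_k(G) > 0 for all 0 ≤ k ≤ n−2. -/
/-- A block graph is a connected graph all of whose blocks are cliques. -/
def IsBlockGraph {V : Type*} (G : SimpleGraph V) : Prop :=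
  G.Connected ∧ ∀ B : Set V, IsBlock G B → G.IsClique B

/-- `distCoeff G k` is the coefficient `c_k(G)` of `x^k` in `det (D(G) - x I)`, where
`D(G)` is the distance matrix of `G`; note `det (D - x I) = (-1)^n det (x I - D)`. -/
noncomputable def distCoeff {V : Type*} [Fintype V] [DecidableEq V]
    (G : SimpleGraph V) (k : ℕ) : ℝ :=
  (-1 : ℝ) ^ (Fintype.card V) *
    (Matrix.charpoly (Matrix.of fun u v : V => (G.dist u v : ℝ))).coeff k

/-! ### Separating vertices -/

/-- The vertices `u` and `v` are joined by a walk of `G` that avoids `a`. In particular both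
differ from `a`. -/
def Avoids {V : Type*} (G : SimpleGraph V) (a u v : V) : Prop :=
  ∃ W : G.Walk u v, a ∉ W.support

section Separation

variable {V : Type*} {G : SimpleGraph V}

lemma Avoids.symm {a u v : V} (h : Avoids G a u v) : Avoids G a v u := by
  obtain ⟨W, hW⟩ := h
  exact ⟨W.reverse, by simpa using hW⟩

lemma Avoids.trans {a u v w : V} (h : Avoids G a u v) (h' : Avoids G a v w) :
    Avoids G a u w := by
  obtain ⟨W, hW⟩ := h
  obtain ⟨W', hW'⟩ := h'
  exact ⟨W.append W', by simp [SimpleGraph.Walk.mem_support_append_iff, hW, hW']⟩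

lemma Avoids.refl {a u : V} (h : u ≠ a) : Avoids G a u u :=
  ⟨SimpleGraph.Walk.nil, by simpa using h.symm⟩

lemma Avoids.left_ne {a u v : V} (h : Avoids G a u v) : u ≠ a := by
  rintro rfl
  obtain ⟨W, hW⟩ := h
  exact hW W.start_mem_support

lemma Avoids.right_ne {a u v : V} (h : Avoids G a u v) : v ≠ a := h.symm.left_ne

lemma reachable_induce_of_walk {S : Set V} {x y : V} (W : G.Walk x y)
    (hS : ∀ z ∈ W.support, z ∈ S) (hx : x ∈ S) (hy : y ∈ S) :
    (G.induce S).Reachable ⟨x, hx⟩ ⟨y, hy⟩ :=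
  ⟨W.induce S hS⟩

lemma reachable_induce_compl_of_walk {S : Set V} (w : S) {x y : V} (W : G.Walk x y)
    (hS : ∀ z ∈ W.support, z ∈ S) (hw : w.1 ∉ W.support)
    (hx : x ∈ S) (hy : y ∈ S) (hxw : (⟨x, hx⟩ : S) ≠ w) (hyw : (⟨y, hy⟩ : S) ≠ w) :
    ((G.induce S).induce {z : S | z ≠ w}).Reachable ⟨⟨x, hx⟩, hxw⟩ ⟨⟨y, hy⟩, hyw⟩ := by
  refine ⟨(W.induce S hS).induce {z : S | z ≠ w} ?_⟩
  rintro z hz rfl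
  rw [SimpleGraph.Walk.support_induce] at hz
  apply hw
  simpa using hz

/-- A connected vertex set without cut vertices extends to a block, hence is a clique in a
block graph. -/
lemma isClique_of_no_cutVertex [Finite V] (hG : IsBlockGraph G) {S : Set V}
    (hne : S.Nonempty) (hc : (G.induce S).Connected)
    (hcut : ∀ v : S, ¬ IsCutVertex (G.induce S) v) : G.IsClique S := by
  obtain ⟨B, hSB, hB⟩ := Finite.exists_le_maximal
    (p := fun C : Set V => (G.induce C).Connected ∧ ∀ v : C, ¬ IsCutVertex (G.induce C) v)
    ⟨hc, hcut⟩
  have hblock : IsBlock G B := by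
    refine ⟨hne.mono hSB, hB.prop.1, hB.prop.2, fun C hBC h1 h2 => ?_⟩
    exact hB.eq_of_le ⟨h1, h2⟩ hBC
  exact (hG.2 B hblock).subset hSB

/-- Two neighbours of `a` joined by a walk avoiding `a` lie on a cycle, hence in a common
block. -/
lemma adj_of_common_neighbor [Finite V] (hG : IsBlockGraph G) {a p q : V} (hp : G.Adj p a)
    (hq : G.Adj q a) (hpq : p ≠ q) (h : Avoids G a p q) : G.Adj p q := by
  classical
  obtain ⟨W, hW⟩ := h
  set P := W.bypass with hP
  have hPp : P.IsPath := W.bypass_isPath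
  have haP : a ∉ P.support := fun h => hW (W.support_bypass_subset_support h)
  set S : Set V := {z | z ∈ P.support ∨ z = a} with hS
  have haS : a ∈ S := Or.inr rfl
  have hpS : p ∈ S := Or.inl P.start_mem_support
  -- The two arcs of the cycle from `z` to `a` inside `S`.
  have arc1 : ∀ z (hz : z ∈ P.support), ∃ T : G.Walk z a, ∀ y,
      y ∈ T.support ↔ y ∈ (P.takeUntil z hz).support ∨ y = a := by
    intro z hz
    refine ⟨(P.takeUntil z hz).reverse.append hp.toWalk, fun y => ?_⟩
    have := (P.takeUntil z hz).start_mem_support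
    simp only [SimpleGraph.Walk.mem_support_append_iff, SimpleGraph.Walk.support_reverse,
      List.mem_reverse, SimpleGraph.Walk.support_cons, SimpleGraph.Walk.support_nil,
      List.mem_cons, List.not_mem_nil, or_false, SimpleGraph.Adj.toWalk]
    constructor
    · rintro (h | rfl | h) <;> simp_all
    · rintro (h | h) <;> simp_all
  have arc2 : ∀ z (hz : z ∈ P.support), ∃ T : G.Walk z a, ∀ y,
      y ∈ T.support ↔ y ∈ (P.dropUntil z hz).support ∨ y = a := by
    intro z hz
    refine ⟨(P.dropUntil z hz).append hq.toWalk, fun y => ?_⟩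
    have := (P.dropUntil z hz).end_mem_support
    simp only [SimpleGraph.Walk.mem_support_append_iff, SimpleGraph.Walk.support_cons,
      SimpleGraph.Walk.support_nil,
      List.mem_cons, List.not_mem_nil, or_false, SimpleGraph.Adj.toWalk]
    constructor
    · rintro (h | rfl | h) <;> simp_all
    · rintro (h | h) <;> simp_all
  have htake : ∀ z (hz : z ∈ P.support) y, y ∈ (P.takeUntil z hz).support → y ∈ P.support :=
    fun z hz y hy => P.support_takeUntil_subset_support hz hy
  have hdrop : ∀ z (hz : z ∈ P.support) y, y ∈ (P.dropUntil z hz).support → y ∈ P.support :=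
    fun z hz y hy => P.support_dropUntil_subset_support hz hy
  have hconn : (G.induce S).Connected := by
    have : Nonempty S := ⟨⟨a, haS⟩⟩
    have key : ∀ z : S, (G.induce S).Reachable z ⟨a, haS⟩ := by
      rintro ⟨z, hz | hz⟩
      · obtain ⟨T, hT⟩ := arc1 z hz
        refine reachable_induce_of_walk T (fun y hy => ?_) _ _
        rcases (hT y).1 hy with h | h
        · exact Or.inl (htake z hz y h)
        · exact Or.inr h
      · subst hz
        exact SimpleGraph.Reachable.refl _
    exact ⟨fun x y => (key x).trans (key y).symm⟩
  have hcut : ∀ v : S, ¬ IsCutVertex (G.induce S) v := by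
    rintro w ⟨⟨x, hx⟩, ⟨y, hy⟩, -, hxy⟩
    apply hxy
    by_cases hwa : w.1 = a
    · have key : ∀ z : S, ∀ hz : z ≠ w,
          ((G.induce S).induce {z : S | z ≠ w}).Reachable ⟨z, hz⟩
            ⟨⟨p, hpS⟩, fun h => hp.ne (by rw [← hwa, ← h])⟩ := by
        rintro ⟨z, hz | hz⟩ hzw
        · refine reachable_induce_compl_of_walk w (P.takeUntil z hz).reverse ?_ ?_ _ _ _ _
          · intro y hy
            exact Or.inl (htake z hz y (by simpa using hy))
          · intro h
            rw [hwa] at h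
            exact haP (htake z hz a (by simpa using h))
        · exact absurd (Subtype.ext (hz.trans hwa.symm)) hzw
      exact (key x hx).trans (key y hy).symm
    · have hwa' : (⟨a, haS⟩ : S) ≠ w := fun h => hwa (by rw [← h])
      have key : ∀ z : S, ∀ hz : z ≠ w,
          ((G.induce S).induce {z : S | z ≠ w}).Reachable ⟨z, hz⟩ ⟨⟨a, haS⟩, hwa'⟩ := by
        rintro ⟨z, hz | hz⟩ hzw
        · have hzw' : w.1 ≠ z := fun h => hzw (Subtype.ext h.symm)
          by_cases hw1 : w.1 ∈ (P.takeUntil z hz).support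
          · have hw2 : w.1 ∉ (P.dropUntil z hz).support := by
              -- The two pieces of the path meet only in `z`.
              intro hw2
              have hnd := hPp.support_nodup
              rw [← P.take_spec hz, SimpleGraph.Walk.support_append] at hnd
              have hd := List.disjoint_of_nodup_append hnd
              rw [SimpleGraph.Walk.mem_support_iff] at hw2
              rcases hw2 with h | h
              · exact hzw' h
              · exact hd hw1 h
            obtain ⟨T, hT⟩ := arc2 z hz
            refine reachable_induce_compl_of_walk w T ?_ ?_ _ _ _ _
            · intro y hy
              exact ((hT y).1 hy).imp_left (hdrop z hz y)
            · rw [hT]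
              tauto
          · obtain ⟨T, hT⟩ := arc1 z hz
            refine reachable_induce_compl_of_walk w T ?_ ?_ _ _ _ _
            · intro y hy
              exact ((hT y).1 hy).imp_left (htake z hz y)
            · rw [hT]
              tauto
        · subst hz
          exact SimpleGraph.Reachable.refl _
      exact (key x hx).trans (key y hy).symm
  exact isClique_of_no_cutVertex hG ⟨a, haS⟩ hconn hcut hpS (Or.inl P.end_mem_support) hpq

/-- The last vertex before `a` on a geodesic from `u` to `a`. -/
lemma exists_prev (hG : G.Connected) {u a : V} (h : u ≠ a) :
    ∃ p, G.Adj p a ∧ G.dist u p + 1 = G.dist u a ∧ Avoids G a u p := by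
  obtain ⟨P, hP, hl⟩ := hG.exists_path_of_dist a u
  cases P with
  | nil => exact absurd rfl h
  | @cons _ p _ hadj W =>
    rw [SimpleGraph.Walk.cons_isPath_iff] at hP
    rw [SimpleGraph.Walk.length_cons] at hl
    refine ⟨p, hadj.symm, ?_, Avoids.symm ⟨W, hP.2⟩⟩
    have h1 := SimpleGraph.dist_le W
    have h2 := hG.dist_triangle (u := a) (v := p) (w := u)
    have h3 := SimpleGraph.dist_eq_one_iff_adj.2 hadj
    rw [SimpleGraph.dist_comm (u := u) (v := p), SimpleGraph.dist_comm (u := u) (v := a)]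
    omega

lemma not_avoids_of_between [Finite V] (hG : IsBlockGraph G) {a u v : V} (hu : u ≠ a)
    (hv : v ≠ a) (hd : G.dist u a + G.dist a v = G.dist u v) : ¬ Avoids G a u v := by
  intro h
  obtain ⟨p, hpa, hp, hup⟩ := exists_prev hG.1 hu
  obtain ⟨q, hqa, hq, hvq⟩ := exists_prev hG.1 hv
  have hpq : Avoids G a p q := hup.symm.trans (h.trans hvq)
  have t1 := hG.1.dist_triangle (u := u) (v := p) (w := v)
  have t2 := hG.1.dist_triangle (u := p) (v := q) (w := v)
  rw [SimpleGraph.dist_comm (u := v) (v := q), SimpleGraph.dist_comm (u := v) (v := a)] at hq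
  have h1 : G.dist p q ≤ 1 := by
    by_cases hne : p = q
    · simp [hne]
    · exact (SimpleGraph.dist_eq_one_iff_adj.2
        (adj_of_common_neighbor hG hpa hqa hne hpq)).le
  omega

open Classical in
lemma dist_eq_card_separators [Fintype V] (hG : IsBlockGraph G) {u v : V} (huv : u ≠ v) :
    G.dist u v =
      1 + (Finset.univ.filter fun a : V => u ≠ a ∧ v ≠ a ∧ ¬ Avoids G a u v).card := by
  obtain ⟨P, hP, hl⟩ := hG.1.exists_path_of_dist u v
  have hset : (Finset.univ.filter fun a : V => u ≠ a ∧ v ≠ a ∧ ¬ Avoids G a u v)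
      = (P.support.toFinset.erase u).erase v := by
    ext a
    simp only [Finset.mem_filter, Finset.mem_univ, true_and, Finset.mem_erase, List.mem_toFinset]
    constructor
    · rintro ⟨h1, h2, h3⟩
      refine ⟨h2.symm, h1.symm, ?_⟩
      by_contra h
      exact h3 ⟨P, h⟩
    · rintro ⟨h1, h2, h3⟩
      refine ⟨h2.symm, h1.symm, not_avoids_of_between hG h2.symm h1.symm ?_⟩
      have e := congrArg SimpleGraph.Walk.length (P.take_spec h3)
      rw [SimpleGraph.Walk.length_append] at e
      have d1 := SimpleGraph.dist_le (P.takeUntil a h3)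
      have d2 := SimpleGraph.dist_le (P.dropUntil a h3)
      have d3 := hG.1.dist_triangle (u := u) (v := a) (w := v)
      omega
  rw [hset, Finset.card_erase_of_mem, Finset.card_erase_of_mem,
    List.toFinset_card_of_nodup hP.support_nodup, P.length_support]
  · have := hG.1.pos_dist_of_ne huv
    omega
  · simp
  · simp [huv.symm]

end Separation

/-! ### Negative definiteness on the hyperplane of sum zero -/

open Classical in
/-- A partial partition, given by the classes of `f` on `{u | p u}`, has as quadratic form the
sum of the squared class sums. -/
lemma sum_same_class {V T : Type*} [Fintype V] [Fintype T] (p : V → Prop) (f : V → T)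
    (x : V → ℝ) :
    ∑ u, ∑ v, x u * x v * (if p u ∧ p v ∧ f u = f v then 1 else 0)
      = ∑ c : T, (∑ u, if p u ∧ f u = c then x u else 0) ^ 2 := by
  simp_rw [sq, Finset.sum_mul_sum]
  rw [Finset.sum_comm' (t' := Finset.univ) (s' := fun _ => Finset.univ) (by simp)]
  rw [Finset.sum_comm]
  conv_rhs => rw [Finset.sum_comm]
  refine Finset.sum_congr rfl fun u _ => ?_
  conv_rhs => rw [Finset.sum_comm]
  refine Finset.sum_congr rfl fun v _ => ?_
  by_cases hu : p u <;> by_cases hv : p v <;> simp [hu, hv, eq_comm]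

open Classical in
/-- The quadratic form of `~ₐ` is the sum over the components `C` of `G - a` of `x(C)²`. -/
lemma avoids_form {V : Type*} [Fintype V] (G : SimpleGraph V) (a : V) (x : V → ℝ) :
    ∑ u, ∑ v, x u * x v * (if Avoids G a u v then 1 else 0)
      = ∑ c : Finset V,
        (∑ u, if u ≠ a ∧ (Finset.univ.filter fun v => Avoids G a u v) = c then x u else 0) ^ 2 := by
  refine Eq.trans ?_ ((sum_same_class (fun u => u ≠ a)
    (fun u => Finset.univ.filter fun v => Avoids G a u v) x).trans ?_)
  swap
  · refine Finset.sum_congr rfl fun c _ => congrArg (· ^ 2) (Finset.sum_congr rfl fun u _ => ?_)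
    congr
  refine Finset.sum_congr rfl fun u _ => Finset.sum_congr rfl fun v _ => ?_
  congr 2
  apply propext
  constructor
  · intro h
    refine ⟨h.left_ne, h.right_ne, ?_⟩
    ext w
    simp only [Finset.mem_filter, Finset.mem_univ, true_and]
    exact ⟨fun h' => h.symm.trans h', fun h' => h.trans h'⟩
  · rintro ⟨_, hv, he⟩
    have : v ∈ Finset.univ.filter fun w => Avoids G a u w := by
      rw [he]
      simpa using Avoids.refl hv
    simpa using this

open Classical in
lemma avoids_form_nonneg {V : Type*} [Fintype V] (G : SimpleGraph V) (a : V) (x : V → ℝ) :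
    0 ≤ ∑ u, ∑ v, x u * x v * (if Avoids G a u v then 1 else 0) := by
  rw [avoids_form]
  positivity

open Classical in
lemma eq_zero_of_avoids_form {V : Type*} [Fintype V] (G : SimpleGraph V) (a : V) (x : V → ℝ)
    (hx : ∑ u, x u = 0)
    (h : ∑ u, ∑ v, x u * x v * (if Avoids G a u v then 1 else 0) = 0) : x a = 0 := by
  rw [avoids_form, Finset.sum_eq_zero_iff_of_nonneg (fun _ _ => sq_nonneg _)] at h
  have h' : ∑ c : Finset V, (∑ u, if u ≠ a ∧
      (Finset.univ.filter fun v => Avoids G a u v) = c then x u else 0) = 0 :=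
    Finset.sum_eq_zero fun c hc => by simpa using h c hc
  rw [Finset.sum_comm] at h'
  have h2 : ∑ u, (if u ≠ a then x u else 0) = 0 := by
    refine Eq.trans ?_ h'
    refine Finset.sum_congr rfl fun u _ => ?_
    by_cases hu : u = a <;> simp [hu]
  have h3 : ∑ u, (if u = a then x u else 0) + ∑ u, (if u ≠ a then x u else 0) = ∑ u, x u := by
    rw [← Finset.sum_add_distrib]
    refine Finset.sum_congr rfl fun u _ => ?_
    by_cases hu : u = a <;> simp [hu]
  rw [h2, hx] at h3
  simpa using h3

open Classical in
lemma dist_formula {V : Type*} [Fintype V] {G : SimpleGraph V} (hG : IsBlockGraph G) (u v : V) :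
    (G.dist u v : ℝ) = (1 - if u = v then 1 else 0) +
      ∑ a, ((if u = a then 0 else 1) * (if v = a then 0 else 1)
        - if Avoids G a u v then 1 else 0) := by
  have hterm : ∀ a, ((if u = a then 0 else 1) * (if v = a then 0 else 1)
        - if Avoids G a u v then 1 else 0 : ℝ)
      = if u ≠ a ∧ v ≠ a ∧ ¬ Avoids G a u v then 1 else 0 := by
    intro a
    by_cases h : Avoids G a u v
    · simp [h, h.left_ne, h.right_ne]
    · by_cases h1 : u = a <;> by_cases h2 : v = a <;> simp [h1, h2, h] <;> simp_all
  simp_rw [hterm]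
  by_cases huv : u = v
  · subst huv
    simp only [SimpleGraph.dist_self, if_true, Nat.cast_zero, sub_self, zero_add]
    symm
    refine Finset.sum_eq_zero fun a _ => if_neg ?_
    rintro ⟨h1, -, h2⟩
    exact h2 (Avoids.refl h1)
  · rw [dist_eq_card_separators hG huv, Finset.sum_boole]
    simp [huv]

lemma dist_form_neg {V : Type*} [Fintype V] {G : SimpleGraph V} (hG : IsBlockGraph G)
    (x : V → ℝ) (hx : ∑ u, x u = 0) (hx0 : x ≠ 0) :
    ∑ u, ∑ v, x u * x v * (G.dist u v : ℝ) < 0 := by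
  classical
  have hone : ∑ u, ∑ v, x u * x v * (1 - if u = v then 1 else 0) = - ∑ a, x a ^ 2 := by
    simp only [mul_sub, mul_one, mul_ite, mul_zero, Finset.sum_sub_distrib, Finset.sum_ite_eq,
      Finset.mem_univ, if_true, ← Finset.mul_sum, hx, sq]
    simp
  have hsum : ∀ a, ∑ u, x u * (if u = a then 0 else 1) = - x a := by
    intro a
    have : ∀ u, x u * (if u = a then 0 else 1) = x u - if u = a then x u else 0 := by
      intro u
      by_cases hu : u = a <;> simp [hu]
    simp_rw [this, Finset.sum_sub_distrib, hx]
    simp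
  have htwo : ∀ a, ∑ u, ∑ v, x u * x v * ((if u = a then 0 else 1) * (if v = a then 0 else 1))
      = x a ^ 2 := by
    intro a
    have h : (∑ u, x u * (if u = a then 0 else 1)) * (∑ u, x u * (if u = a then 0 else 1))
        = x a ^ 2 := by
      rw [hsum]
      ring
    rw [← h, Finset.sum_mul_sum]
    refine Finset.sum_congr rfl fun u _ => Finset.sum_congr rfl fun v _ => ?_
    ring
  have hmain : ∑ u, ∑ v, x u * x v * (G.dist u v : ℝ)
      = - ∑ a, ∑ u, ∑ v, x u * x v * (if Avoids G a u v then 1 else 0) := by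
    simp_rw [dist_formula hG, mul_add, Finset.sum_add_distrib, Finset.mul_sum]
    rw [hone]
    have hswap : ∑ u, ∑ v, ∑ a, x u * x v * ((if u = a then 0 else 1) * (if v = a then 0 else 1)
        - if Avoids G a u v then 1 else 0)
        = ∑ a, ∑ u, ∑ v, x u * x v * ((if u = a then 0 else 1) * (if v = a then 0 else 1)
        - if Avoids G a u v then 1 else 0) := by
      rw [Finset.sum_comm]
      rw [Finset.sum_congr rfl fun v _ => Finset.sum_comm]
      rw [Finset.sum_comm]
      exact Finset.sum_congr rfl fun a _ => Finset.sum_comm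
    rw [hswap]
    simp_rw [mul_sub, Finset.sum_sub_distrib, htwo]
    ring
  rw [hmain, neg_lt_zero]
  have hnn := fun a => avoids_form_nonneg G a x
  refine lt_of_le_of_ne (Finset.sum_nonneg fun a _ => hnn a) fun h => hx0 ?_
  rw [eq_comm, Finset.sum_eq_zero_iff_of_nonneg (fun a _ => hnn a)] at h
  funext a
  exact eq_zero_of_avoids_form G a x hx (h a (Finset.mem_univ a))

/-! ### Spectrum and coefficients -/

open Polynomial in
/-- The signs of the coefficients of `(X - ∑ μᵢ) ∏ (X + μᵢ)` for positive `μᵢ`. The first three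
conjuncts strengthen the induction hypothesis; passing from `s` to `s ∪ {j}` rests on
`(X - (μⱼ + t)) (X + μⱼ) q = (X + μⱼ) (X - t) q - μⱼ (X + μⱼ) q`. -/
lemma coeff_signs {ι : Type*} (s : Finset ι) (μ : ι → ℝ) (hμ : ∀ i ∈ s, 0 < μ i) :
    (∀ k, 0 ≤ (∏ i ∈ s, (X + C (μ i))).coeff k) ∧
    (∀ k ≤ s.card, 0 < (∏ i ∈ s, (X + C (μ i))).coeff k) ∧
    (∀ k ≤ s.card, ((X - C (∑ i ∈ s, μ i)) * ∏ i ∈ s, (X + C (μ i))).coeff k ≤ 0) ∧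
    (∀ k < s.card, ((X - C (∑ i ∈ s, μ i)) * ∏ i ∈ s, (X + C (μ i))).coeff k < 0) := by
  classical
  induction s using Finset.induction_on with
  | empty =>
    refine ⟨fun k => ?_, fun k hk => ?_, fun k hk => ?_, fun k hk => ?_⟩
    · simp only [Finset.prod_empty, coeff_one]
      split_ifs <;> norm_num
    · simp_all
    · simp_all
    · simp at hk
  | insert j s hj ih =>
    obtain ⟨h0, h1, h2, h3⟩ := ih fun i hi => hμ i (Finset.mem_insert_of_mem hi)
    have hm : 0 < μ j := hμ j (Finset.mem_insert_self _ _)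
    rw [Finset.prod_insert hj, Finset.sum_insert hj, Finset.card_insert_of_notMem hj]
    set q := ∏ i ∈ s, (X + C (μ i)) with hq
    set t := ∑ i ∈ s, μ i with ht
    have hqd : q.natDegree = s.card := by
      rw [hq, natDegree_prod_of_monic _ _ fun i _ => monic_X_add_C _]
      simp
    have hqm : q.Monic := monic_prod_of_monic _ _ fun i _ => monic_X_add_C _
    have n0 : ∀ k, 0 ≤ ((X + C (μ j)) * q).coeff k := by
      intro k
      cases k with
      | zero => simpa [add_mul, mul_coeff_zero] using mul_nonneg hm.le (h0 0)
      | succ k =>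
        simp only [add_mul, coeff_add, coeff_X_mul, coeff_C_mul]
        exact add_nonneg (h0 k) (mul_nonneg hm.le (h0 _))
    have n1 : ∀ k ≤ s.card + 1, 0 < ((X + C (μ j)) * q).coeff k := by
      intro k hk
      cases k with
      | zero => simpa [add_mul, mul_coeff_zero] using mul_pos hm (h1 0 (Nat.zero_le _))
      | succ k =>
        simp only [add_mul, coeff_add, coeff_X_mul, coeff_C_mul]
        exact add_pos_of_pos_of_nonneg (h1 k (by omega)) (mul_nonneg hm.le (h0 _))
    have e : (X - C (μ j + t)) * ((X + C (μ j)) * q)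
        = (X + C (μ j)) * ((X - C t) * q) - C (μ j) * ((X + C (μ j)) * q) := by
      rw [C_add]
      ring
    have n3 : ∀ k < s.card + 1, ((X - C (μ j + t)) * ((X + C (μ j)) * q)).coeff k < 0 := by
      intro k hk
      have p1 := mul_pos hm (n1 k hk.le)
      have p2 : ((X + C (μ j)) * ((X - C t) * q)).coeff k ≤ 0 := by
        have p3 := mul_nonneg hm.le (neg_nonneg.2 (h2 k (by omega)))
        cases k with
        | zero =>
          rw [add_mul, coeff_add, coeff_X_mul_zero, coeff_C_mul]
          linarith
        | succ k =>
          rw [add_mul, coeff_add, coeff_X_mul, coeff_C_mul]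
          have p4 := h2 k (by omega)
          linarith
      rw [e, coeff_sub, coeff_C_mul]
      linarith
    refine ⟨n0, n1, fun k hk => ?_, n3⟩
    rcases Nat.lt_or_ge k (s.card + 1) with h | h
    · exact (n3 k h).le
    · obtain rfl : k = s.card + 1 := le_antisymm hk h
      -- The second highest coefficient is in fact `∑ μ - ∑ μ = 0`; its nonpositivity reduces to
      -- the one given by `h2`.
      have c1 : q.coeff (s.card + 1) = 0 := coeff_eq_zero_of_natDegree_lt (by omega)
      have c2 : q.coeff s.card = 1 := by
        rw [← hqd]
        exact hqm
      have c3 := h2 s.card le_rfl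
      have c4 : ((X - C t) * q).coeff (s.card + 1) = 1 := by
        rw [sub_mul, coeff_sub, coeff_X_mul, coeff_C_mul, c1, c2]
        simp
      rw [e, coeff_sub, coeff_C_mul, add_mul, coeff_add, coeff_X_mul, coeff_C_mul, c4,
        add_mul, coeff_add, coeff_X_mul, coeff_C_mul, c1, c2]
      linarith

/-- A combination of two orthonormal eigenvectors with entry sum zero shows that at most one
eigenvalue is nonnegative. -/
lemma eigenvalue_neg_of_ne {V : Type*} [Fintype V] [DecidableEq V] (A : Matrix V V ℝ)
    (hA : A.IsHermitian)
    (hneg : ∀ x : V → ℝ, ∑ u, x u = 0 → x ≠ 0 → dotProduct x (A.mulVec x) < 0)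
    {i j : V} (hij : i ≠ j) (hi : 0 ≤ hA.eigenvalues i) : hA.eigenvalues j < 0 := by
  by_contra! hj
  set a : V → ℝ := (hA.eigenvectorBasis i).ofLp with ha
  set b : V → ℝ := (hA.eigenvectorBasis j).ofLp with hb
  have eA : A.mulVec a = hA.eigenvalues i • a := hA.mulVec_eigenvectorBasis i
  have eB : A.mulVec b = hA.eigenvalues j • b := hA.mulVec_eigenvectorBasis j
  have hon := hA.eigenvectorBasis.orthonormal
  have hinner : ∀ k l, dotProduct (hA.eigenvectorBasis k).ofLp (hA.eigenvectorBasis l).ofLp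
      = if k = l then 1 else 0 := by
    intro k l
    have := (orthonormal_iff_ite.1 hon) l k
    rw [EuclideanSpace.inner_eq_star_dotProduct] at this
    simpa [eq_comm] using this
  have haa : dotProduct a a = 1 := by simpa using hinner i i
  have hbb : dotProduct b b = 1 := by simpa using hinner j j
  have hab : dotProduct a b = 0 := by simpa [hij] using hinner i j
  have hba : dotProduct b a = 0 := by simpa [hij.symm] using hinner j i
  have key : ∀ c d : ℝ, c * ∑ u, a u + d * ∑ u, b u = 0 → c ^ 2 + d ^ 2 = 0 := by
    intro c d hcd
    by_contra hne
    have hxx : dotProduct (c • a + d • b) (c • a + d • b) = c ^ 2 + d ^ 2 := by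
      simp only [add_dotProduct, dotProduct_add, smul_dotProduct, dotProduct_smul, haa, hbb, hab,
        hba, smul_eq_mul]
      ring
    have := hneg (c • a + d • b)
      (by simpa [Finset.sum_add_distrib, Finset.mul_sum] using hcd)
      (by
        intro h0
        rw [h0] at hxx
        simp at hxx
        exact hne hxx.symm)
    rw [Matrix.mulVec_add, Matrix.mulVec_smul, Matrix.mulVec_smul, eA, eB] at this
    simp only [add_dotProduct, dotProduct_add, smul_dotProduct, dotProduct_smul, haa, hbb, hab,
      hba, smul_eq_mul] at this
    nlinarith [mul_nonneg (sq_nonneg c) hi, mul_nonneg (sq_nonneg d) hj]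
  have h1 := key (∑ u, b u) (-∑ u, a u) (by ring)
  have hsa : ∑ u, a u = 0 := by nlinarith [sq_nonneg (∑ u, a u), sq_nonneg (∑ u, b u)]
  have h2 := key 1 0 (by simp [hsa])
  norm_num at h2

open Polynomial in
lemma charpoly_coeff_neg {V : Type*} [Fintype V] [DecidableEq V] (A : Matrix V V ℝ)
    (hA : A.IsHermitian) (htr : A.trace = 0)
    (hneg : ∀ x : V → ℝ, ∑ u, x u = 0 → x ≠ 0 → dotProduct x (A.mulVec x) < 0)
    (k : ℕ) (hk : k + 2 ≤ Fintype.card V) : A.charpoly.coeff k < 0 := by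
  have hsum : ∑ i, hA.eigenvalues i = 0 := by
    have := hA.trace_eq_sum_eigenvalues
    rw [htr] at this
    simpa using this.symm
  have : Nonempty V := Fintype.card_pos_iff.1 (by omega)
  obtain ⟨i, hi⟩ : ∃ i, 0 ≤ hA.eigenvalues i := by
    by_contra! h
    exact (Finset.sum_neg (fun i _ => h i) Finset.univ_nonempty).ne hsum
  have hpos : ∀ j ∈ Finset.univ.erase i, 0 < - hA.eigenvalues j := fun j hj =>
    neg_pos.2 (eigenvalue_neg_of_ne A hA hneg (Finset.ne_of_mem_erase hj).symm hi)
  have hcs := (coeff_signs _ _ hpos).2.2.2 k (by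
    rw [Finset.card_erase_of_mem (Finset.mem_univ i), Finset.card_univ]
    omega)
  have hval : hA.eigenvalues i = ∑ j ∈ Finset.univ.erase i, - hA.eigenvalues j := by
    rw [← Finset.add_sum_erase _ _ (Finset.mem_univ i)] at hsum
    rw [Finset.sum_neg_distrib]
    linarith
  rw [hA.charpoly_eq, ← Finset.mul_prod_erase _ _ (Finset.mem_univ i)]
  simpa [← hval, sub_eq_add_neg] using hcs

/-- For a block graph `G` on `n` vertices, `(-1)^(n-1) * c_k(G) > 0` for all `0 ≤ k ≤ n-2`. -/
theorem distCoeff_sign_of_blockGraph {V : Type*} [Fintype V] [DecidableEq V]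
    (G : SimpleGraph V) (hG : IsBlockGraph G) :
    ∀ k : ℕ, k + 2 ≤ Fintype.card V →
      0 < (-1 : ℝ) ^ (Fintype.card V - 1) * distCoeff G k := by
  intro k hk
  have h := charpoly_coeff_neg (Matrix.of fun u v : V => (G.dist u v : ℝ))
    (by
      ext u v
      simp [SimpleGraph.dist_comm])
    (by simp [Matrix.trace])
    (by
      intro x hx hx0
      have := dist_form_neg hG x hx hx0
      simp only [dotProduct, Matrix.mulVec, Matrix.of_apply, Finset.mul_sum]
      refine lt_of_eq_of_lt ?_ this
      refine Finset.sum_congr rfl fun u _ => Finset.sum_congr rfl fun v _ => ?_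
      ring)
    k hk
  obtain ⟨m, hm⟩ : ∃ m, Fintype.card V = m + 1 := ⟨Fintype.card V - 1, by omega⟩
  unfold distCoeff
  rw [← mul_assoc, ← pow_add, hm, Odd.neg_one_pow ⟨m, by omega⟩]
  linarith
end

section
/- Let G be a block graph on n vertices. Then the sequence (−1)^{n−1} c_0(G), (−1)^{n−1} c_1(G), …, (−1)^{n−1} c_{n−2}(G) of coefficients of the distance characteristic polynomial of G is unimodal, i.e., there exists an index m with 0 ≤ m ≤ n−2 such that (−1)^{n−1} c_i(G) ≤ (−1)^{n−1} c_{i+1}(G) for all 0 ≤ i < m and (−1)^{n−1} c_i(G) ≥ (−1)^{n−1} c_{i+1}(G) for all m ≤ i < n−2. -/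
/-! ### Vertex sets without cut vertices -/

/-- Every vertex set of `H` inducing a connected subgraph without a cut vertex is a clique.
Unlike the definition of a block graph, this asks for no maximality, and therefore passes to
induced subgraphs. -/
def HeredClique {W : Type*} (H : SimpleGraph W) : Prop :=
  ∀ (S : Set W), (H.induce S).Connected → (∀ v : S, ¬ IsCutVertex (H.induce S) v) →
    H.IsClique S

lemma isCutVertex_of_iso {W W' : Type*} {H : SimpleGraph W} {H' : SimpleGraph W'} (e : H ≃g H')
    {v : W} (h : IsCutVertex H v) : IsCutVertex H' (e v) := by
  obtain ⟨a, b, hr, hn⟩ := h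
  refine ⟨⟨e a.1, fun h => a.2 (e.injective h)⟩, ⟨e b.1, fun h => b.2 (e.injective h)⟩,
    hr.map e.toHom, fun hc => hn ?_⟩
  let g : H'.induce {w : W' | w ≠ e v} →g H.induce {w : W | w ≠ v} :=
    { toFun := fun w => ⟨e.symm w.1, fun h => w.2 ((e.symm_apply_eq).1 h)⟩
      map_rel' := fun {x y} hxy => by
        have : H'.Adj x.1 y.1 := hxy
        exact e.symm.map_rel_iff.2 this }
  have h := hc.map g
  have ha : g ⟨e a.1, fun h => a.2 (e.injective h)⟩ = ⟨a.1, a.2⟩ :=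
    Subtype.ext (e.symm_apply_apply a.1)
  have hb : g ⟨e b.1, fun h => b.2 (e.injective h)⟩ = ⟨b.1, b.2⟩ :=
    Subtype.ext (e.symm_apply_apply b.1)
  rwa [ha, hb] at h

lemma HeredClique.induce {W : Type*} {H : SimpleGraph W} (hH : HeredClique H) (T : Set W) :
    HeredClique (H.induce T) := by
  intro S hS hcut
  let e : (H.induce T).induce S ≃g H.induce (Subtype.val '' S) :=
    { toEquiv := Equiv.Set.image Subtype.val S Subtype.val_injective
      map_rel_iff' := Iff.rfl }
  have := hH (Subtype.val '' S) (e.connected_iff.1 hS) (fun v hv => by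
    have h2 := isCutVertex_of_iso e.symm hv
    exact hcut _ h2)
  intro x hx y hy hxy
  exact this ⟨x, hx, rfl⟩ ⟨y, hy, rfl⟩ (fun h => hxy (Subtype.ext h))

lemma IsBlockGraph.heredClique {V : Type*} [Finite V] {G : SimpleGraph V}
    (hG : IsBlockGraph G) : HeredClique G := by
  intro S hS hcut
  obtain ⟨C, hSC, hC⟩ := Finite.exists_le_maximal
    (p := fun C : Set V => (G.induce C).Connected ∧ ∀ v : C, ¬ IsCutVertex (G.induce C) v)
    (a := S) ⟨hS, hcut⟩
  have hblock : IsBlock G C := by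
    refine ⟨?_, hC.prop.1, hC.prop.2, fun D hCD h1 h2 => ?_⟩
    · obtain ⟨x⟩ := hS.nonempty
      exact ⟨x.1, hSC x.2⟩
    · exact le_antisymm hCD (hC.le_of_ge ⟨h1, h2⟩ hCD)
  exact (hG.2 C hblock).subset hSC

/-! ### Distances across a cut vertex -/

/-- If `v` is the only vertex of `T` with neighbours outside `T`, then collapsing the outside
of `T` onto `v` turns walks of `H` into walks inside `T` that are no longer. -/
lemma exists_walk_induce {W : Type*} {H : SimpleGraph W} {T : Set W} {v : W}
    (hT : ∀ x ∈ T, ∀ y ∉ T, H.Adj x y → x = v) {x y : W} (p : H.Walk x y) :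
    ∀ (x' y' : T), (x ∈ T → x'.1 = x) → (x ∉ T → x'.1 = v) → (y ∈ T → y'.1 = y) →
      (y ∉ T → y'.1 = v) → ∃ q : (H.induce T).Walk x' y', q.length ≤ p.length := by
  induction p with
  | nil =>
    rename_i u
    intro x' y' h1 h2 h3 h4
    have : x' = y' := by
      apply Subtype.ext
      by_cases hu : u ∈ T
      · rw [h1 hu, h3 hu]
      · rw [h2 hu, h4 hu]
    subst this
    exact ⟨.nil, le_rfl⟩
  | cons hadj p ih =>
    rename_i a b c
    intro x' y' h1 h2 h3 h4
    by_cases hb : b ∈ T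
    · obtain ⟨q, hq⟩ := ih ⟨b, hb⟩ y' (fun _ => rfl) (fun h => absurd hb h) h3 h4
      by_cases ha : a ∈ T
      · have hxb : (H.induce T).Adj x' ⟨b, hb⟩ := by
          change H.Adj x'.1 b
          rw [h1 ha]; exact hadj
        exact ⟨.cons hxb q, by simpa using hq⟩
      · have hx : x' = ⟨b, hb⟩ := Subtype.ext ((h2 ha).trans (hT b hb a ha hadj.symm).symm)
        subst hx
        exact ⟨q, by simp; omega⟩
    · have hx : x'.1 = v := by
        by_cases ha : a ∈ T
        · rw [h1 ha, hT a ha b hb hadj]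
        · exact h2 ha
      obtain ⟨q, hq⟩ := ih x' y' (fun h => absurd h hb) (fun _ => hx) h3 h4
      exact ⟨q, by simp; omega⟩

lemma induce_connected_dist {W : Type*} {H : SimpleGraph W} (hH : H.Connected) {T : Set W}
    {v : W} (hv : v ∈ T) (hT : ∀ x ∈ T, ∀ y ∉ T, H.Adj x y → x = v) :
    (H.induce T).Connected ∧ ∀ x y : T, (H.induce T).dist x y = H.dist x.1 y.1 := by
  have key (x y : T) (p : H.Walk x.1 y.1) :
      ∃ q : (H.induce T).Walk x y, q.length ≤ p.length :=
    exists_walk_induce hT p x y (fun _ => rfl) (fun h => absurd x.2 h) (fun _ => rfl)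
      (fun h => absurd y.2 h)
  have hconn : (H.induce T).Connected := by
    have : Nonempty T := ⟨⟨v, hv⟩⟩
    refine ⟨fun x y => ?_⟩
    obtain ⟨p⟩ := hH.preconnected x.1 y.1
    exact (key x y p).choose.reachable
  refine ⟨hconn, fun x y => le_antisymm ?_ ?_⟩
  · obtain ⟨p, hp⟩ := hH.exists_walk_length_eq_dist x.1 y.1
    obtain ⟨q, hq⟩ := key x y p
    exact (SimpleGraph.dist_le q).trans (hq.trans hp.le)
  · obtain ⟨p, hp⟩ := hconn.exists_walk_length_eq_dist x y
    rw [← hp]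
    have := SimpleGraph.dist_le (p.map (SimpleGraph.Embedding.induce T).toHom)
    rw [SimpleGraph.Walk.length_map] at this
    exact this

/-- If `v` is the only vertex outside `A` with neighbours in `A`, distances add up across `v`. -/
lemma dist_eq_add_of_gate {W : Type*} {H : SimpleGraph W} (hH : H.Connected) {A : Set W}
    {v : W} (hA : ∀ x ∈ A, ∀ y ∉ A, H.Adj x y → y = v) {x y : W}
    (hx : x = v ∨ x ∈ A) (hy : y ∉ A) : H.dist x y = H.dist x v + H.dist v y := by
  refine le_antisymm hH.dist_triangle ?_
  obtain ⟨p, hp⟩ := hH.exists_walk_length_eq_dist x y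
  rw [← hp]
  clear hp
  induction p with
  | nil =>
    rcases hx with rfl | hx
    · simp
    · exact absurd hx hy
  | cons hadj p ih =>
    rename_i a b c
    rcases hx with rfl | hx
    · rw [SimpleGraph.dist_self, zero_add]
      exact SimpleGraph.dist_le (.cons hadj p)
    · have hb : b = v ∨ b ∈ A := by
        by_cases hb : b ∈ A
        · exact Or.inr hb
        · exact Or.inl (hA a hx b hb hadj)
      have h1 := ih hb hy
      have h2 : H.dist a v ≤ H.dist a b + H.dist b v := hH.dist_triangle
      have h3 : H.dist a b = 1 := SimpleGraph.dist_eq_one_iff_adj.2 hadj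
      rw [SimpleGraph.Walk.length_cons]
      omega

/-! ### The distance matrix is conditionally negative semidefinite -/

lemma sum_eq_sum_subtype {W : Type*} [Fintype W] (T : Set W) [Fintype T] (f : W → ℝ)
    (hf : ∀ w, w ∉ T → f w = 0) : ∑ w, f w = ∑ w : T, f w.1 := by
  classical
  rw [← Finset.sum_filter_of_ne (p := fun w => w ∈ T)
    (fun w _ hw => by by_contra h; exact hw (hf w h))]
  exact Finset.sum_subtype _ (by simp) f

/-- The quadratic form of the distance matrix of a connected graph all of whose connected induced
subgraphs without cut vertices are cliques is nonpositive on vectors with coordinate sum zero.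
A complete graph has `D = J - I`. At a cut vertex `v` a vector `x` of sum zero splits as `y + z`,
both of sum zero, with `y` and `z` supported on the two sides of `v` (each including `v`); since
distances add up across `v`, the cross term vanishes. -/
theorem dist_form_nonpos (n : ℕ) : ∀ {W : Type*} [Fintype W] (H : SimpleGraph W),
    Fintype.card W = n → HeredClique H → H.Connected → ∀ x : W → ℝ, ∑ w, x w = 0 →
      ∑ u, ∑ w, x u * x w * (H.dist u w : ℝ) ≤ 0 := by
  classical
  induction n using Nat.strong_induction_on with
  | _ n ih =>
  intro W _ H hcard hH hconn x hx
  by_cases hcut : ∃ v, IsCutVertex H v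
  · obtain ⟨v, a, b, -, hab⟩ := hcut
    set A : Set W := {w | ∃ h : w ≠ v, (H.induce {w : W | w ≠ v}).Reachable ⟨a.1, a.2⟩ ⟨w, h⟩}
      with hAdef
    have haA : a.1 ∈ A := ⟨a.2, SimpleGraph.Reachable.refl _⟩
    have hbA : b.1 ∉ A := fun ⟨_, h⟩ => hab h
    have hvA : v ∉ A := fun ⟨h, _⟩ => h rfl
    have hA : ∀ x ∈ A, ∀ y ∉ A, H.Adj x y → y = v := by
      rintro x ⟨hxv, hx⟩ y hy hadj
      by_contra hyv
      refine hy ⟨hyv, hx.trans (SimpleGraph.Adj.reachable ?_)⟩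
      exact hadj
    -- the form restricted to one side of `v`
    have side (T : Set W) (c : W) (hc : c ∉ T) (hv : v ∈ T)
        (hT : ∀ x ∈ T, ∀ y ∉ T, H.Adj x y → x = v) (y : W → ℝ) (hy : ∑ w, y w = 0)
        (hyT : ∀ w, w ∉ T → y w = 0) :
        ∑ u, ∑ w, y u * y w * (H.dist u w : ℝ) ≤ 0 := by
      obtain ⟨h1, h2⟩ := induce_connected_dist hconn hv hT
      have h3 := ih (Fintype.card T) (hcard ▸ Fintype.card_subtype_lt (p := (· ∈ T)) hc)
        (H.induce T) rfl (hH.induce T) h1 (fun w => y w.1)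
        (by rw [← sum_eq_sum_subtype T y hyT]; exact hy)
      rw [sum_eq_sum_subtype T _ (fun u hu => by simp [hyT u hu])]
      refine le_of_eq_of_le (Finset.sum_congr rfl fun u _ => ?_) h3
      rw [sum_eq_sum_subtype T _ (fun w hw => by simp [hyT w hw])]
      exact Finset.sum_congr rfl fun w _ => by rw [h2]
    set α : ℝ := ∑ w, if w ∈ A then x w else 0 with hα
    set y : W → ℝ := fun w => (if w ∈ A then x w else 0) + (if w = v then -α else 0) with hydef
    set z : W → ℝ := fun w => x w - y w with hzdef
    have hy : ∑ w, y w = 0 := by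
      simp only [hydef, Finset.sum_add_distrib, ← hα]
      simp
    have hz : ∑ w, z w = 0 := by
      simp only [hzdef, Finset.sum_sub_distrib, hx, hy, sub_zero]
    have hy0 : ∀ w, ¬ (w = v ∨ w ∈ A) → y w = 0 := by
      intro w hw
      push Not at hw
      simp [hydef, hw.1, hw.2]
    have hz0 : ∀ w, w ∈ A → z w = 0 := by
      intro w hw
      have : w ≠ v := fun h => hvA (h ▸ hw)
      simp [hzdef, hydef, hw, this]
    have hyy := side {w | w = v ∨ w ∈ A} b.1 (by simp [b.2, hbA]) (Or.inl rfl)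
      (fun p hp q hq hpq => by
        rcases hp with hp | hp
        · exact hp
        · exact absurd (Or.inl (hA p hp q (fun h => hq (Or.inr h)) hpq)) hq)
      y hy hy0
    have hzz := side Aᶜ a.1 (by simpa using haA) hvA
      (fun p hp q hq hpq => hA q (by simpa using hq) p hp hpq.symm) z hz
      (fun w hw => hz0 w (by simpa using hw))
    have hyz : ∑ u, ∑ w, y u * z w * (H.dist u w : ℝ) = 0 := by
      have : ∀ u w, y u * z w * (H.dist u w : ℝ) =
          (y u * (H.dist u v : ℝ)) * z w + y u * (z w * (H.dist v w : ℝ)) := by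
        intro u w
        by_cases hu : u = v ∨ u ∈ A
        · by_cases hw : w ∈ A
          · simp [hz0 w hw]
          · rw [dist_eq_add_of_gate hconn hA hu hw]
            push_cast
            ring
        · simp [hy0 u hu]
      simp only [this, Finset.sum_add_distrib, ← Finset.mul_sum, ← Finset.sum_mul, hy, hz]
      simp
    have hzy : ∑ u, ∑ w, z u * y w * (H.dist u w : ℝ) = 0 := by
      rw [← hyz, Finset.sum_comm]
      refine Finset.sum_congr rfl fun u _ => Finset.sum_congr rfl fun w _ => ?_
      rw [SimpleGraph.dist_comm]
      ring
    have hsplit : ∑ u, ∑ w, x u * x w * (H.dist u w : ℝ) =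
        ∑ u, ∑ w, y u * y w * (H.dist u w : ℝ) + ∑ u, ∑ w, y u * z w * (H.dist u w : ℝ) +
        (∑ u, ∑ w, z u * y w * (H.dist u w : ℝ)) + ∑ u, ∑ w, z u * z w * (H.dist u w : ℝ) := by
      simp only [← Finset.sum_add_distrib]
      refine Finset.sum_congr rfl fun u _ => Finset.sum_congr rfl fun w _ => ?_
      simp only [hzdef]
      ring
    rw [hsplit, hyz, hzy]
    linarith
  · push Not at hcut
    have hclique : ∀ u w, u ≠ w → H.Adj u w := by
      let e : H.induce Set.univ ≃g H := SimpleGraph.induceUnivIso H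
      have := hH Set.univ (e.connected_iff.2 hconn)
        (fun v hv => hcut _ (isCutVertex_of_iso e hv))
      exact fun u w huw => this trivial trivial huw
    have hd : ∀ u w, x u * x w * (H.dist u w : ℝ) = x u * x w - if u = w then x u * x w else 0 := by
      intro u w
      by_cases huw : u = w
      · simp [huw]
      · simp [huw, SimpleGraph.dist_eq_one_iff_adj.2 (hclique u w huw)]
    simp only [hd, Finset.sum_sub_distrib, ← Finset.mul_sum, hx]
    simp only [mul_zero, Finset.sum_const_zero, Finset.sum_ite_eq, Finset.mem_univ, if_true,
      zero_sub, neg_nonpos]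
    exact Finset.sum_nonneg fun u _ => mul_self_nonneg _

/-! ### At most one positive eigenvalue -/

/-- A symmetric matrix whose form is nonpositive on the hyperplane of vectors with coordinate sum
zero has at most one positive eigenvalue: the span of two eigenvectors with positive eigenvalues
would meet that hyperplane. -/
lemma eigenvalue_unique_pos {V : Type*} [Fintype V] [DecidableEq V] {M : Matrix V V ℝ}
    (hM : M.IsHermitian)
    (hneg : ∀ x : V → ℝ, ∑ w, x w = 0 → x ⬝ᵥ M.mulVec x ≤ 0) {i j : V} (hij : i ≠ j)
    (hi : 0 < hM.eigenvalues i) : hM.eigenvalues j ≤ 0 := by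
  by_contra! hj
  set f : V → ℝ := ⇑(hM.eigenvectorBasis i) with hf
  set g : V → ℝ := ⇑(hM.eigenvectorBasis j) with hg
  have hinner (k l : V) : (⇑(hM.eigenvectorBasis k) : V → ℝ) ⬝ᵥ ⇑(hM.eigenvectorBasis l) =
      if l = k then 1 else 0 := by
    have := orthonormal_iff_ite.1 hM.eigenvectorBasis.orthonormal l k
    rw [← this]
    simp [PiLp.inner_apply, dotProduct]
  have hMf : M.mulVec f = hM.eigenvalues i • f := hM.mulVec_eigenvectorBasis i
  have hMg : M.mulVec g = hM.eigenvalues j • g := hM.mulVec_eigenvectorBasis j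
  have hff : f ⬝ᵥ f = 1 := by rw [hf, hinner]; simp
  have hgg : g ⬝ᵥ g = 1 := by rw [hg, hinner]; simp
  have hfg : f ⬝ᵥ g = 0 := by rw [hf, hg, hinner]; simp [hij.symm]
  have hgf : g ⬝ᵥ f = 0 := by rw [dotProduct_comm, hfg]
  have form (a b : ℝ) (hab : a * ∑ w, f w + b * ∑ w, g w = 0) :
      a ^ 2 * hM.eigenvalues i + b ^ 2 * hM.eigenvalues j ≤ 0 := by
    have h := hneg (a • f + b • g) (by
      simpa [Finset.sum_add_distrib, ← Finset.mul_sum] using hab)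
    simp only [Matrix.mulVec_add, Matrix.mulVec_smul, hMf, hMg, dotProduct_add, add_dotProduct,
      dotProduct_smul, smul_dotProduct, hff, hgg, hfg, hgf, smul_eq_mul] at h
    linarith
  by_cases hs : ∑ w, f w = 0
  · have := form 1 0 (by simp [hs])
    linarith
  · have := form (-∑ w, g w) (∑ w, f w) (by ring)
    have h1 : 0 < (∑ w, f w) ^ 2 * hM.eigenvalues j := by positivity
    have h2 : 0 ≤ (-∑ w, g w) ^ 2 * hM.eigenvalues i := by positivity
    linarith

/-! ### Elementary symmetric functions -/

/-- The elementary symmetric functions of the entries of a list, indexed by `ℤ` and zero at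
indices outside `0, …, l.length`. -/
def elemSymm : List ℝ → ℤ → ℝ
  | [], j => if j = 0 then 1 else 0
  | x :: l, j => elemSymm l j + x * elemSymm l (j - 1)

/-- The Jacobi–Trudi minors `e_j e_k - e_{j-1} e_{k+1}` (Schur functions of two-column shapes). -/
def minor (l : List ℝ) (j k : ℤ) : ℝ :=
  elemSymm l j * elemSymm l k - elemSymm l (j - 1) * elemSymm l (k + 1)

lemma elemSymm_neg (l : List ℝ) : ∀ j < 0, elemSymm l j = 0 := by
  induction l with
  | nil => intro j hj; simp [elemSymm, hj.ne]
  | cons x l ih => intro j hj; simp [elemSymm, ih j hj, ih (j - 1) (by omega)]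

lemma elemSymm_large (l : List ℝ) : ∀ j : ℤ, (l.length : ℤ) < j → elemSymm l j = 0 := by
  induction l with
  | nil => intro j hj; simp at hj; simp [elemSymm, hj.ne']
  | cons x l ih =>
    intro j hj
    simp at hj
    simp [elemSymm, ih j (by omega), ih (j - 1) (by omega)]

lemma elemSymm_zero (l : List ℝ) : elemSymm l 0 = 1 := by
  induction l with
  | nil => simp [elemSymm]
  | cons x l ih => simp [elemSymm, ih, elemSymm_neg l (-1) (by omega)]

lemma elemSymm_one (l : List ℝ) : elemSymm l 1 = l.sum := by
  induction l with
  | nil => simp [elemSymm]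
  | cons x l ih => simp [elemSymm, ih, elemSymm_zero]; ring

lemma minor_cons (x : ℝ) (l : List ℝ) (j k : ℤ) :
    minor (x :: l) j k =
      minor l j k + x * (minor l j (k - 1) + minor l (j - 1) k) + x ^ 2 * minor l (j - 1) (k - 1) := by
  simp only [minor, elemSymm, sub_add_cancel, add_sub_cancel_right]
  ring

lemma minor_self_sub_one (l : List ℝ) (j : ℤ) : minor l j (j - 1) = 0 := by
  simp only [minor, sub_add_cancel]
  ring

lemma minor_nonneg (l : List ℝ) (hl : ∀ x ∈ l, 0 ≤ x) :
    ∀ j k : ℤ, j ≤ k + 1 → 0 ≤ minor l j k := by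
  induction l with
  | nil =>
    intro j k hjk
    simp only [minor, elemSymm]
    have : ¬ (j - 1 = 0 ∧ k + 1 = 0) := by omega
    split_ifs <;> first | omega | simp
  | cons x l ih =>
    intro j k hjk
    have hx : 0 ≤ x := hl x (by simp)
    have ih' := ih (fun y hy => hl y (by simp [hy]))
    rcases hjk.lt_or_eq with h | h
    · rw [minor_cons]
      have h1 := ih' j k hjk
      have h2 := ih' j (k - 1) (by omega)
      have h3 := ih' (j - 1) k (by omega)
      have h4 := ih' (j - 1) (k - 1) (by omega)
      positivity
    · obtain rfl : k = j - 1 := by omega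
      rw [minor_self_sub_one]

/-- Multiplying by `e_1` dominates enlarging the longer column by one (a Pieri rule). -/
lemma minor_succ_le (l : List ℝ) (hl : ∀ x ∈ l, 0 ≤ x) :
    ∀ j k : ℤ, j ≤ k → minor l j (k + 1) ≤ elemSymm l 1 * minor l j k := by
  induction l with
  | nil =>
    intro j k hjk
    simp only [minor, elemSymm]
    split_ifs <;> first | omega | simp
  | cons x l ih =>
    intro j k hjk
    have hx : 0 ≤ x := hl x (by simp)
    have hl' : ∀ y ∈ l, 0 ≤ y := fun y hy => hl y (by simp [hy])
    have he : 0 ≤ elemSymm l 1 := by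
      rw [elemSymm_one]; exact List.sum_nonneg hl'
    have hone : elemSymm (x :: l) 1 = elemSymm l 1 + x := by simp [elemSymm, elemSymm_zero]
    rw [hone, minor_cons, minor_cons, add_sub_cancel_right]
    have h1 := ih hl' j k hjk
    have h2 := ih hl' (j - 1) k (by omega)
    have n1 := minor_nonneg l hl' j (k - 1) (by omega)
    have n4 := minor_nonneg l hl' (j - 1) (k - 1) (by omega)
    have t1 : 0 ≤ x * (elemSymm l 1 * minor l j (k - 1)) := by positivity
    have t2 := mul_le_mul_of_nonneg_left h2 hx
    have t3 : 0 ≤ x ^ 2 * (elemSymm l 1 * minor l (j - 1) (k - 1)) := by positivity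
    have t4 : 0 ≤ x ^ 2 * minor l j (k - 1) := by positivity
    have t5 : 0 ≤ x ^ 3 * minor l (j - 1) (k - 1) := by positivity
    nlinarith

lemma coeff_prod_X_add_C (l : List ℝ) : ∀ k : ℕ,
    ((l.map fun x => (Polynomial.X + Polynomial.C x : Polynomial ℝ)).prod).coeff k =
      elemSymm l (l.length - k) := by
  induction l with
  | nil =>
    intro k
    simp [elemSymm, Polynomial.coeff_one]
  | cons x l ih =>
    intro k
    rw [List.map_cons, List.prod_cons, add_mul, Polynomial.coeff_add, Polynomial.coeff_C_mul, ih]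
    have h1 : ((x :: l).length : ℤ) - k - 1 = l.length - k := by simp; ring
    rw [elemSymm, h1]
    congr 1
    cases k with
    | zero =>
      rw [Polynomial.coeff_X_mul_zero, elemSymm_large]
      simp
    | succ k =>
      rw [Polynomial.coeff_X_mul, ih]
      congr 1
      simp

/-! ### Log-concavity and unimodality -/

/-- With `b_j = e_1 e_j - e_{j+1}`, log-concavity of `b` makes every descent persist; the bound
`b_{j+1} ≤ e_1 b_j` takes care of vanishing terms. -/
lemma minor_one_descent (l : List ℝ) (hl : ∀ x ∈ l, 0 ≤ x) (j : ℤ) (hj : 1 ≤ j)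
    (h : minor l 1 (j + 1) ≤ minor l 1 j) : minor l 1 (j + 1 + 1) ≤ minor l 1 (j + 1) := by
  have he : 0 ≤ elemSymm l 1 := by
    rw [elemSymm_one]; exact List.sum_nonneg hl
  have n1 := minor_nonneg l hl 1 (j + 1) (by omega)
  have n2 := minor_nonneg l hl 1 (j + 1 + 1) (by omega)
  rcases n1.eq_or_lt with h0 | hpos
  · have := minor_succ_le l hl 1 (j + 1) (by omega)
    rw [← h0, mul_zero] at this
    rw [← h0]; exact this
  · have hlc : minor l 1 j * minor l 1 (j + 1 + 1) ≤ minor l 1 (j + 1) ^ 2 := by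
      have h1 := mul_le_mul_of_nonneg_left (minor_succ_le l hl (j + 1) (j + 1) le_rfl) he
      have h2 := minor_nonneg l hl (j + 1 + 1) (j + 1 + 1) (by omega)
      simp only [minor, add_sub_cancel_right, sub_self, elemSymm_zero] at h1 h2 ⊢
      nlinarith
    have : minor l 1 (j + 1) * minor l 1 (j + 1 + 1) ≤ minor l 1 (j + 1) * minor l 1 (j + 1) := by
      nlinarith [mul_le_mul_of_nonneg_right h n2]
    exact le_of_mul_le_mul_left this hpos

/-- The coefficients of `x^0, …, x^(N-1)` of `-(x - e_1) ∏ (x + μ_i)`, for `N` nonnegative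
numbers `μ_i` with sum `e_1`, form a unimodal sequence. -/
lemma unimodal_minor (l : List ℝ) (hl : ∀ x ∈ l, 0 ≤ x) :
    ∃ m : ℕ, m ≤ l.length - 1 ∧
      (∀ i : ℕ, i < m → minor l 1 (l.length - i) ≤ minor l 1 (l.length - (i + 1 : ℕ))) ∧
      (∀ i : ℕ, m ≤ i → i < l.length - 1 →
        minor l 1 (l.length - (i + 1 : ℕ)) ≤ minor l 1 (l.length - i)) := by
  classical
  rcases Nat.eq_zero_or_pos l.length with h0 | hpos
  · exact ⟨0, by omega, by intro i hi; omega, by intro i _ hi; omega⟩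
  have hlast : minor l 1 ((l.length : ℤ) + 1) ≤ minor l 1 l.length := by
    have : minor l 1 ((l.length : ℤ) + 1) = 0 := by
      simp only [minor]
      rw [elemSymm_large l (l.length + 1) (by omega), elemSymm_large l (l.length + 1 + 1) (by omega)]
      simp
    rw [this]
    exact minor_nonneg l hl _ _ (by omega)
  have hex : ∃ j : ℕ, 1 ≤ j ∧ minor l 1 (j + 1) ≤ minor l 1 j := ⟨l.length, hpos, hlast⟩
  set j₀ := Nat.find hex with hj₀
  obtain ⟨hj1, hj2⟩ := Nat.find_spec hex
  have hle : j₀ ≤ l.length := Nat.find_min' hex ⟨hpos, hlast⟩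
  have hdesc : ∀ d : ℕ, minor l 1 ((j₀ + d : ℕ) + 1) ≤ minor l 1 (j₀ + d : ℕ) := by
    intro d
    induction d with
    | zero => exact hj2
    | succ d ih =>
      have := minor_one_descent l hl (j₀ + d : ℕ) (by omega) ih
      push_cast at this ⊢
      simpa [add_assoc] using this
  refine ⟨l.length - j₀, by omega, fun i hi => ?_, fun i hi hi2 => ?_⟩
  · have := hdesc (l.length - (i + 1) - j₀)
    have e1 : ((j₀ + (l.length - (i + 1) - j₀) : ℕ) : ℤ) = l.length - (i + 1 : ℕ) := by omega
    have e2 : (l.length : ℤ) - (i + 1 : ℕ) + 1 = l.length - i := by omega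
    rw [e1] at this
    rwa [e2] at this
  · have := Nat.find_min hex (m := l.length - (i + 1)) (by omega)
    simp only [not_and, not_le] at this
    have h2 := (this (by omega)).le
    have e1 : ((l.length - (i + 1) : ℕ) : ℤ) = l.length - (i + 1 : ℕ) := by omega
    have e2 : (l.length : ℤ) - (i + 1 : ℕ) + 1 = l.length - i := by omega
    rw [e1] at h2
    rwa [e2] at h2

/-- For a block graph `G` on `n` vertices, the sequence
`(-1)^(n-1) c_0(G), …, (-1)^(n-1) c_(n-2)(G)` is unimodal: there is an index `m ≤ n - 2`
such that the sequence is nondecreasing up to `m` and nonincreasing from `m` on. -/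
theorem distCoeff_unimodal_of_blockGraph {V : Type*} [Fintype V] [DecidableEq V]
    (G : SimpleGraph V) (hG : IsBlockGraph G) :
    ∃ m : ℕ, m ≤ Fintype.card V - 2 ∧
      (∀ i : ℕ, i < m →
        (-1 : ℝ) ^ (Fintype.card V - 1) * distCoeff G i ≤
          (-1 : ℝ) ^ (Fintype.card V - 1) * distCoeff G (i + 1)) ∧
      (∀ i : ℕ, m ≤ i → i < Fintype.card V - 2 →
        (-1 : ℝ) ^ (Fintype.card V - 1) * distCoeff G (i + 1) ≤
          (-1 : ℝ) ^ (Fintype.card V - 1) * distCoeff G i) := by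
  set M : Matrix V V ℝ := Matrix.of fun u v : V => (G.dist u v : ℝ) with hMdef
  have hM : M.IsHermitian := by
    ext u v
    simp [hMdef, SimpleGraph.dist_comm]
  have hneg : ∀ x : V → ℝ, ∑ w, x w = 0 → x ⬝ᵥ M.mulVec x ≤ 0 := by
    intro x hx
    refine le_of_eq_of_le ?_ (dist_form_nonpos _ G rfl hG.heredClique hG.1 x hx)
    simp only [dotProduct, Matrix.mulVec, hMdef, Matrix.of_apply, Finset.mul_sum]
    exact Finset.sum_congr rfl fun u _ => Finset.sum_congr rfl fun w _ => by ring
  obtain ⟨i₀, hi₀⟩ : ∃ i₀, ∀ j, j ≠ i₀ → hM.eigenvalues j ≤ 0 := by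
    by_cases h : ∃ i, 0 < hM.eigenvalues i
    · obtain ⟨i, hi⟩ := h
      exact ⟨i, fun j hj => eigenvalue_unique_pos hM hneg hj.symm hi⟩
    · push Not at h
      obtain ⟨i⟩ := hG.1.nonempty
      exact ⟨i, fun j _ => h j⟩
  set l : List ℝ := (Finset.univ.erase i₀).toList.map fun j => -hM.eigenvalues j with hldef
  have hlen : l.length = Fintype.card V - 1 := by
    simp [hldef]
  have hcard : 1 ≤ Fintype.card V := Fintype.card_pos_iff.2 ⟨i₀⟩
  have hl : ∀ x ∈ l, 0 ≤ x := by
    intro x hx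
    simp only [hldef, List.mem_map, Finset.mem_toList, Finset.mem_erase] at hx
    obtain ⟨j, hj, rfl⟩ := hx
    linarith [hi₀ j hj.1]
  have hsum : hM.eigenvalues i₀ = l.sum := by
    have htr : ∑ j, hM.eigenvalues j = 0 := by
      have := hM.trace_eq_sum_eigenvalues
      simp [Matrix.trace, hMdef] at this
      exact this.symm
    rw [← Finset.add_sum_erase _ _ (Finset.mem_univ i₀)] at htr
    rw [hldef, Finset.sum_map_toList, Finset.sum_neg_distrib]
    linarith
  have hpoly : M.charpoly = (Polynomial.X - Polynomial.C l.sum) *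
      (l.map fun x => (Polynomial.X + Polynomial.C x : Polynomial ℝ)).prod := by
    rw [hM.charpoly_eq, ← Finset.mul_prod_erase _ _ (Finset.mem_univ i₀), ← hsum, hldef,
      List.map_map, Finset.prod_map_toList]
    simp [sub_eq_add_neg]
  have hcoeff : ∀ k : ℕ, (-1 : ℝ) ^ (Fintype.card V - 1) * distCoeff G k =
      minor l 1 (l.length - k) := by
    intro k
    have hsign : (-1 : ℝ) ^ (Fintype.card V - 1) * (-1 : ℝ) ^ Fintype.card V = -1 := by
      rw [← pow_add]
      exact Odd.neg_one_pow ⟨Fintype.card V - 1, by omega⟩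
    rw [distCoeff, ← mul_assoc, hsign, ← hMdef, hpoly, sub_mul, Polynomial.coeff_sub,
      Polynomial.coeff_C_mul, coeff_prod_X_add_C, minor, elemSymm_one, sub_self, elemSymm_zero]
    cases k with
    | zero =>
      rw [Polynomial.coeff_X_mul_zero, elemSymm_large l (l.length - (0 : ℕ) + 1) (by omega)]
      ring
    | succ k =>
      rw [Polynomial.coeff_X_mul, coeff_prod_X_add_C]
      have : (l.length : ℤ) - (k + 1 : ℕ) + 1 = l.length - k := by push_cast; ring
      rw [this]
      ring
  obtain ⟨m, hm, h1, h2⟩ := unimodal_minor l hl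
  refine ⟨m, by omega, fun i hi => ?_, fun i hi hi2 => ?_⟩
  · rw [hcoeff, hcoeff]; exact h1 i hi
  · rw [hcoeff, hcoeff]; exact h2 i hi (by omega)
end

section
/- Let k ≥ 2 and t ≥ 3 be integers and let W(k,t) be the windmill graph on n = k(t−1)+1 vertices. Then the characteristic polynomial det(xI − D(W(k,t))) of its distance matrix equals (x+1)^{(t−2)k} (x+t)^{k−1} (x^2 − (t−2+2(t−1)(k−1)) x − k(t−1)). -/
/-!
Let `m = t - 1`. The matrix `D + 1` depends only on the classes of its two indices under the
map collapsing each blade `K_m` to a point, so it is `S * T * Sᵀ` for a class-indicator matrix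
`S`, and by `Matrix.charpoly_mul_comm'` its characteristic polynomial is, up to a power of `X`,
that of the `(k + 1) × (k + 1)` weighted quotient (`charpoly_submatrix_collapse`). That quotient
plus the scalar `m` is again constant on classes, now for the map collapsing all blades to one
point, so a second application of the same lemma reduces it to a `2 × 2` matrix. The shifts by
`1` and `m` turn the two powers of `X` into powers of `X + 1` and `X + t`.
-/

open Polynomial

/-- The windmill graph `W(k,t)`: `k` disjoint copies of `K_(t-1)` together with one
additional universal vertex (`none`) adjacent to all other vertices, i.e. `k` cliques
`K_t` joined at one shared universal vertex. It has `k*(t-1) + 1` vertices. -/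
def windmill (k t : ℕ) : SimpleGraph (Option (Fin k × Fin (t - 1))) :=
  SimpleGraph.fromRel (fun u v => u = none ∨ ∃ p q, u = some p ∧ v = some q ∧ p.1 = q.1)

lemma windmill_adj (k t : ℕ) (u v : Option (Fin k × Fin (t - 1))) :
    (windmill k t).Adj u v ↔
      u ≠ v ∧ (u = none ∨ v = none ∨ u.map Prod.fst = v.map Prod.fst) := by
  rcases u with _ | p <;> rcases v with _ | q
  · simp [windmill]
  · simp [windmill]
  · simp [windmill]
  · simp only [windmill, SimpleGraph.fromRel_adj, Option.map_some, Option.some.injEq,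
      reduceCtorEq, false_or]
    grind

/-- The hub is at distance at most `1` from everything, and any two vertices of different blades
are joined by a path of length `2` through the hub. -/
lemma windmill_dist (k t : ℕ) (u v : Option (Fin k × Fin (t - 1))) :
    (windmill k t).dist u v =
      if u = v then 0
      else if u = none ∨ v = none ∨ u.map Prod.fst = v.map Prod.fst then 1 else 2 := by
  split_ifs with h1 h2
  · simp [h1]
  · exact SimpleGraph.dist_eq_one_iff_adj.2 ((windmill_adj k t u v).2 ⟨h1, h2⟩)
  · push Not at h2
    have hu : (windmill k t).Adj u none := (windmill_adj k t _ _).2 ⟨h2.1, by simp⟩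
    have hv : (windmill k t).Adj none v := (windmill_adj k t _ _).2 ⟨h2.2.1.symm, by simp⟩
    let w : (windmill k t).Walk u v := .cons hu (.cons hv .nil)
    have hle : (windmill k t).dist u v ≤ 2 := SimpleGraph.dist_le w
    have h0 : (windmill k t).dist u v ≠ 0 := fun h => h1 (w.reachable.dist_eq_zero_iff.1 h)
    have hne1 : (windmill k t).dist u v ≠ 1 := fun h =>
      absurd ((windmill_adj k t u v).1 (SimpleGraph.dist_eq_one_iff_adj.1 h)).2
        (by simpa using h2)
    omega

/-- A matrix that is constant on the classes of `f` has, up to a power of `X`, the characteristic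
polynomial of its quotient matrix, whose columns are weighted by the class sizes `c`. -/
lemma charpoly_submatrix_collapse {V W : Type*} [Fintype V] [DecidableEq V] [Fintype W]
    [DecidableEq W] (f : V → W) (T : Matrix W W ℝ) (c : W → ℝ)
    (hc : ∀ b, (∑ v, if f v = b then (1 : ℝ) else 0) = c b) :
    X ^ Fintype.card W * (T.submatrix f f).charpoly =
      X ^ Fintype.card V * (Matrix.of fun a b => T a b * c b).charpoly := by
  let S : Matrix V W ℝ := Matrix.of fun v b => if f v = b then 1 else 0
  let R : Matrix W V ℝ := T.submatrix id f
  have h1 : S * R = T.submatrix f f := by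
    ext u v
    simp [S, R, Matrix.mul_apply]
  have h2 : R * S = Matrix.of fun a b => T a b * c b := by
    ext a b
    simp only [S, R, Matrix.mul_apply, Matrix.of_apply, Matrix.submatrix_apply, id]
    rw [← hc, Finset.mul_sum]
    refine Finset.sum_congr rfl fun v _ => ?_
    split_ifs with h <;> simp [h]
  rw [← h1, ← h2]
  exact Matrix.charpoly_mul_comm' S R

/-- The quotient of `D + 1` on hub (`none`) and blades. -/
def bladeQuotient (k : ℕ) : Matrix (Option (Fin k)) (Option (Fin k)) ℝ :=
  Matrix.of fun a b => if a = none ∨ b = none ∨ a = b then 1 else 2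

lemma charpoly_weighted_bladeQuotient (k m : ℕ) (hk : 1 ≤ k) :
    (Matrix.of fun a b => bladeQuotient k a b * (b.elim 1 fun _ => (m : ℝ))).charpoly =
      (X + C (m : ℝ)) ^ (k - 1) *
        ((X + C (m : ℝ)) ^ 2 - C (1 + m + 2 * m * k : ℝ) * (X + C (m : ℝ)) +
          C ((1 + m) * (2 * m * k) - m * k : ℝ)) := by
  let g : Option (Fin k) → Fin 2 := fun a => a.elim 0 fun _ => 1
  let T : Matrix (Fin 2) (Fin 2) ℝ := !![1 + (m : ℝ), m; 1, 2 * m]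
  have hM : (Matrix.of fun a b => bladeQuotient k a b * (b.elim 1 fun _ => (m : ℝ))) =
      T.submatrix g g - Matrix.scalar _ (m : ℝ) := by
    ext a b
    rcases a with _ | i <;> rcases b with _ | j
    · simp [bladeQuotient, T, g, -map_natCast]
    · simp [bladeQuotient, T, g, -map_natCast]
    · simp [bladeQuotient, T, g, -map_natCast]
    · by_cases h : i = j
      · simp [bladeQuotient, T, g, h, -map_natCast]
        ring
      · simp [bladeQuotient, T, g, h, -map_natCast]
  have hT := charpoly_submatrix_collapse g T ![1, (k : ℝ)] (by
    intro b
    rw [Fintype.sum_option]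
    fin_cases b <;> simp [g])
  have hT' : (T.submatrix g g).charpoly = X ^ (k - 1) *
      (X ^ 2 - C (1 + m + 2 * m * k : ℝ) * X + C ((1 + m) * (2 * m * k) - m * k : ℝ)) := by
    apply mul_left_cancel₀ (pow_ne_zero (Fintype.card (Fin 2)) (X_ne_zero (R := ℝ)))
    have htr : (Matrix.of fun a b => T a b * ![1, (k : ℝ)] b).trace = 1 + m + 2 * m * k := by
      simp [T, Matrix.trace_fin_two]
    have hdet : (Matrix.of fun a b => T a b * ![1, (k : ℝ)] b).det =
        (1 + m) * (2 * m * k) - m * k := by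
      simp [T, Matrix.det_fin_two]
    have hcard : Fintype.card (Option (Fin k)) = Fintype.card (Fin 2) + (k - 1) := by
      simp
      omega
    rw [hT, Matrix.charpoly_fin_two, htr, hdet, hcard, pow_add, mul_assoc]
  rw [hM, Matrix.charpoly_sub_scalar, hT']
  simp

/-- For `k ≥ 2`, `t ≥ 3`, the characteristic polynomial `det (x I - D)` of the distance
matrix of the windmill graph `W(k,t)` equals
`(x+1)^((t-2)k) (x+t)^(k-1) (x^2 - (t-2+2(t-1)(k-1)) x - k(t-1))`. -/
theorem windmill_distanceMatrix_charpoly (k t : ℕ) (hk : 2 ≤ k) (ht : 3 ≤ t) :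
    (Matrix.charpoly (Matrix.of fun u v : Option (Fin k × Fin (t - 1)) =>
        ((windmill k t).dist u v : ℝ))) =
      (X + 1) ^ ((t - 2) * k) * (X + C (t : ℝ)) ^ (k - 1) *
        (X ^ 2 - C ((t : ℝ) - 2 + 2 * ((t : ℝ) - 1) * ((k : ℝ) - 1)) * X -
          C ((k : ℝ) * ((t : ℝ) - 1))) := by
  obtain ⟨m, rfl⟩ : ∃ m, t = m + 1 := ⟨t - 1, by omega⟩
  let f : Option (Fin k × Fin (m + 1 - 1)) → Option (Fin k) := Option.map Prod.fst
  have hD : (Matrix.of fun u v : Option (Fin k × Fin (m + 1 - 1)) =>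
        ((windmill k (m + 1)).dist u v : ℝ)) =
      (bladeQuotient k).submatrix f f - Matrix.scalar _ (1 : ℝ) := by
    ext u v
    rw [Matrix.of_apply, windmill_dist]
    rcases u with _ | p <;> rcases v with _ | q
    · simp [bladeQuotient, f]
    · simp [bladeQuotient, f]
    · simp [bladeQuotient, f]
    · by_cases h : p = q
      · simp [bladeQuotient, f, h]
      · by_cases h' : p.1 = q.1 <;> simp [bladeQuotient, f, h, h']
  have hS := charpoly_submatrix_collapse f (bladeQuotient k) (fun b => b.elim 1 fun _ => (m : ℝ))
    (by
      intro b
      rw [Fintype.sum_option, Fintype.sum_prod_type]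
      rcases b with _ | j <;> simp [f])
  have hS' : ((bladeQuotient k).submatrix f f).charpoly = X ^ ((m + 1 - 2) * k) *
      (Matrix.of fun a b => bladeQuotient k a b * (b.elim 1 fun _ => (m : ℝ))).charpoly := by
    apply mul_left_cancel₀ (pow_ne_zero (Fintype.card (Option (Fin k))) (X_ne_zero (R := ℝ)))
    have hcard : Fintype.card (Option (Fin k × Fin (m + 1 - 1))) =
        Fintype.card (Option (Fin k)) + (m + 1 - 2) * k := by
      obtain ⟨r, rfl⟩ : ∃ r, m = r + 1 := ⟨m - 1, by omega⟩
      simp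
      ring
    rw [hS, hcard, pow_add, mul_assoc]
  rw [hD, Matrix.charpoly_sub_scalar, hS', charpoly_weighted_bladeQuotient k m (by omega)]
  have hX : (X + 1 + C (m : ℝ)) = X + C ((m + 1 : ℕ) : ℝ) := by
    rw [Nat.cast_add, Nat.cast_one, C_add, C_1]
    ring
  simp only [mul_comp, pow_comp, add_comp, sub_comp, X_comp, C_comp, map_one, hX]
  have h2 : (C 2 : ℝ[X]) = 2 := rfl
  simp only [Nat.cast_add, Nat.cast_one, C_add, C_sub, C_mul, C_1, h2]
  ring
end

section
/- For each integer k ≥ 2 let F_{2k+1} = W(k,3) be the friendship graph on n = 2k+1 vertices. Then the sequence (−1)^{n−1} c_0(F_{2k+1}), …, (−1)^{n−1} c_{n−2}(F_{2k+1}) is unimodal, and there exist a constant C > 0 and an integer K such that for all k ≥ K, every index m at which this sequence attains its maximum satisfies |m − 3k/4| ≤ C · log k; that is, as k → ∞ the peak occurs at 3k/4 + O(log k). -/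
/-!
Why the theorem holds. Write `k = j + 1`. Ordering the distance matrix by triangles, `xI - D` is a
block diagonal matrix plus a matrix of rank two, so `det_friendship` gives
`det (xI - D) = (x+1)^k (x+3)^(k-1) (x² - (4k-3)x - 2k)`. The normalized coefficients `a_i` are
therefore those of `P · (2k + (4k-3)X - X²)` with `P = basePoly j = (X+1)^k (X+3)^(k-1)`.

Unimodality. The differences `a_i - a_(i-1)` are the coefficients of
`(1 - X)(2k + (4k-3)X - X²) · P`. The cubic factor has sign pattern `+ + - +`, and multiplication
by `X + c` with `c ≥ 0` does not create sign changes (`TwoChanges.mul_X_add_C`), so the differences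
have pattern `+ - +`. Since `a_(2k) = tr D = 0` and `a_(2k+1) = -1`, the difference at `2k+1` is
negative, which pushes the second change past the end (`friendshipNormCoeff_unimodal`). The same
argument gives unimodality of the coefficients `p_i` of `P` (`basePoly_unimodal`).

Peak. The equation `(X+1)(X+3) P' = ((2k-1)X + 4k-1) P` is a three-term recurrence for `p_i`
(`basePoly_rec`). If `p` increases at two consecutive steps, or decreases at two consecutive
steps, the recurrence tells on which side of `3k/4` the index lies; with unimodality this places
the mode of `p` near `3k/4`. The recurrence also rewrites `a_(n+3) - a_(n+2)` through `p_n`,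
`p_(n+1)`, `p_(n+2)` (`friendshipNormCoeff_sub`), and comparing these shows that `a` strictly
increases at a step just below `3k/4` and strictly decreases at a step just above
(`friendshipNormCoeff_lt_succ`, `friendshipNormCoeff_succ_lt`). By unimodality every maximizer lies
between these two steps, so its distance to `3k/4` is even bounded.
-/


open Polynomial

/-- `(-1)^(n-1) c_i(F_(2k+1))` for the friendship graph `F_(2k+1) = W(k,3)` on
`n = 2k+1` vertices. -/
noncomputable def friendshipNormCoeff (k i : ℕ) : ℝ :=
  (-1 : ℝ) ^ (2 * k + 1 - 1) * distCoeff (windmill k 3) i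


/-! ### Distances in the friendship graph -/

theorem windmill_adj_s11 (k : ℕ) (p q : Fin k × Fin 2) :
    (windmill k 3).Adj (some p) (some q) ↔ p ≠ q ∧ p.1 = q.1 := by
  simp only [windmill, SimpleGraph.fromRel_adj]
  constructor
  · rintro ⟨h, h'⟩
    refine ⟨fun e => h (by rw [e]), ?_⟩
    rcases h' with (h' | ⟨a, b, ha, hb, hab⟩) | (h' | ⟨a, b, ha, hb, hab⟩)
    · cases h'
    · cases ha; cases hb; exact hab
    · cases h'
    · cases ha; cases hb; exact hab.symm
  · rintro ⟨h, h'⟩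
    exact ⟨fun e => h (Option.some.inj e), Or.inl (Or.inr ⟨p, q, rfl, rfl, h'⟩)⟩

theorem windmill_adj_none (k : ℕ) (p : Fin k × Fin 2) :
    (windmill k 3).Adj none (some p) := by
  simp [windmill, SimpleGraph.fromRel_adj]

theorem windmill_dist_none (k : ℕ) (p : Fin k × Fin 2) :
    (windmill k 3).dist none (some p) = 1 :=
  SimpleGraph.dist_eq_one_iff_adj.2 (windmill_adj_none k p)

theorem windmill_dist_some (k : ℕ) (p q : Fin k × Fin 2) :
    (windmill k 3).dist (some p) (some q) =
      if p = q then 0 else if p.1 = q.1 then 1 else 2 := by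
  split_ifs with h h'
  · rw [h, SimpleGraph.dist_self]
  · exact SimpleGraph.dist_eq_one_iff_adj.2 ((windmill_adj_s11 k p q).2 ⟨h, h'⟩)
  · have h2 : (windmill k 3).dist (some p) (some q) ≤ 2 :=
      SimpleGraph.dist_le (SimpleGraph.Walk.cons (windmill_adj_none k p).symm
        (SimpleGraph.Walk.cons (windmill_adj_none k q) SimpleGraph.Walk.nil))
    have hr : (windmill k 3).Reachable (some p) (some q) :=
      ((windmill_adj_none k p).symm.reachable).trans (windmill_adj_none k q).reachable
    have h0 : (windmill k 3).dist (some p) (some q) ≠ 0 := by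
      intro h0
      exact h (Option.some.inj (hr.dist_eq_zero_iff.1 h0))
    have h1 : (windmill k 3).dist (some p) (some q) ≠ 1 := by
      intro h1
      exact h' ((windmill_adj_s11 k p q).1 (SimpleGraph.dist_eq_one_iff_adj.1 h1)).2
    omega

/-- The distance matrix of `F_(2k+1)`. -/
noncomputable def friendshipDist (k : ℕ) :
    Matrix (Option (Fin k × Fin 2)) (Option (Fin k × Fin 2)) ℝ :=
  Matrix.of fun u v => ((windmill k 3).dist u v : ℝ)

theorem friendshipDist_some_some (k : ℕ) (p q : Fin k × Fin 2) :
    friendshipDist k (some p) (some q) = if p = q then 0 else if p.1 = q.1 then 1 else 2 := by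
  have h : friendshipDist k (some p) (some q) = ((windmill k 3).dist (some p) (some q) : ℝ) := rfl
  rw [h, windmill_dist_some]
  split_ifs <;> simp

theorem friendshipDist_none_some (k : ℕ) (p : Fin k × Fin 2) :
    friendshipDist k none (some p) = 1 := by
  have h : friendshipDist k none (some p) = ((windmill k 3).dist none (some p) : ℝ) := rfl
  rw [h, windmill_dist_none, Nat.cast_one]

theorem friendshipDist_some_none (k : ℕ) (p : Fin k × Fin 2) :
    friendshipDist k (some p) none = 1 := by
  have h : friendshipDist k (some p) none = ((windmill k 3).dist (some p) none : ℝ) := rfl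
  rw [h, SimpleGraph.dist_comm, windmill_dist_none, Nat.cast_one]

theorem friendshipDist_none_none (k : ℕ) : friendshipDist k none none = 0 := by
  simp [friendshipDist]

/-- The vertices of `F_(2k+1)` with the hub listed last and the two vertices of each triangle
indexed in the order expected by `Matrix.blockDiagonal`. -/
def friendshipEquiv (k : ℕ) : (Fin 2 × Fin k) ⊕ Unit ≃ Option (Fin k × Fin 2) :=
  (Equiv.sumCongr (Equiv.prodComm _ _) (Equiv.refl _)).trans
    (Equiv.optionEquivSumPUnit (Fin k × Fin 2)).symm

/-! ### The distance characteristic polynomial -/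

/-- The distance polynomial of `F_(2k+1)` at `x > 0`, multiplied by `x + 3` so that the exponent
`k - 1` does not occur. -/
theorem det_friendship (k : ℕ) (x : ℝ) (hx : 0 < x) :
    (Matrix.scalar _ x - friendshipDist k).det * (x + 3) =
      ((x + 1) * (x + 3)) ^ k * (x ^ 2 - (4 * k - 3) * x - 2 * k) := by
  have hx0 : x ≠ 0 := hx.ne'
  have hx3 : x + 3 ≠ 0 := by positivity
  -- `xI - D = A + U * V` with `A` block diagonal and `U * V` of rank two; as `A * U' = U`, this is
  -- `A * (1 + U' * V)`, and `det (1 + U' * V) = det (1 + V * U')` is a `2 × 2` determinant.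
  let A : Matrix ((Fin 2 × Fin k) ⊕ Unit) ((Fin 2 × Fin k) ⊕ Unit) ℝ :=
    Matrix.fromBlocks (Matrix.blockDiagonal fun _ : Fin k => !![x + 2, 1; 1, x + 2]) 0 0
      (Matrix.of fun _ _ => x)
  let U' : Matrix ((Fin 2 × Fin k) ⊕ Unit) (Fin 2) ℝ :=
    Matrix.of (Sum.elim (fun _ => ![0, 1 / (x + 3)]) (fun _ => ![1 / x, 0]))
  let U : Matrix ((Fin 2 × Fin k) ⊕ Unit) (Fin 2) ℝ :=
    Matrix.of (Sum.elim (fun _ => ![0, 1]) (fun _ => ![1, 0]))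
  let V : Matrix (Fin 2) ((Fin 2 × Fin k) ⊕ Unit) ℝ :=
    Matrix.of ![Sum.elim (fun _ => -1) (fun _ => 0), Sum.elim (fun _ => -2) (fun _ => -1)]
  have hAU : A * U' = U := by
    ext i b
    rcases i with ⟨a, c⟩ | i
    · fin_cases a <;> fin_cases b <;>
        simp [A, U', U, Matrix.mul_apply, Fintype.sum_prod_type, Matrix.blockDiagonal_apply] <;>
        field_simp <;> ring
    · fin_cases b <;> simp [A, U', U, Matrix.mul_apply, hx0]
  have hM : (Matrix.scalar _ x - friendshipDist k).submatrix (friendshipEquiv k)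
      (friendshipEquiv k) = A * (1 + U' * V) := by
    rw [mul_add, mul_one, ← Matrix.mul_assoc, hAU]
    ext i j
    rcases i with ⟨a, c⟩ | i <;> rcases j with ⟨b, d⟩ | j
    · by_cases hcd : c = d
      · subst hcd
        fin_cases a <;> fin_cases b <;>
          simp [A, U, V, friendshipEquiv, friendshipDist_some_some, Matrix.mul_apply,
            Matrix.blockDiagonal_apply] <;> norm_num
      · simp [A, U, V, friendshipEquiv, friendshipDist_some_some, Matrix.mul_apply,
            Matrix.blockDiagonal_apply, hcd]
    · simp [A, U, V, friendshipEquiv, friendshipDist_some_none, Matrix.mul_apply]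
    · simp [A, U, V, friendshipEquiv, friendshipDist_none_some, Matrix.mul_apply]
    · simp [A, U, V, friendshipEquiv, friendshipDist_none_none, Matrix.mul_apply]
  have hVU : (1 + V * U').det = (x ^ 2 - (4 * k - 3) * x - 2 * k) / (x * (x + 3)) := by
    rw [Matrix.det_fin_two]
    simp only [V, U', Matrix.add_apply, Matrix.mul_apply, Fintype.sum_sum_type]
    simp
    field_simp
    ring
  have hA : A.det = ((x + 1) * (x + 3)) ^ k * x := by
    simp only [A, Matrix.det_fromBlocks_zero₂₁, Matrix.det_blockDiagonal, Matrix.det_fin_two]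
    simp
    left
    ring
  rw [← Matrix.det_submatrix_equiv_self (friendshipEquiv k), hM, Matrix.det_mul,
    Matrix.det_one_add_mul_comm, hVU, hA]
  field_simp

/-- The factor of the distance polynomial of `F_(2j+3)` whose roots are `-1` and `-3`. -/
noncomputable def basePoly (j : ℕ) : ℝ[X] := (X + C 1) ^ (j + 1) * (X + C 3) ^ j

theorem friendshipNormCoeff_eq (j i : ℕ) :
    friendshipNormCoeff (j + 1) i =
      (basePoly j * (C (2 * j + 2 : ℝ) + C (4 * j + 1 : ℝ) * X - X ^ 2)).coeff i := by
  have key : (friendshipDist (j + 1)).charpoly =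
      -(basePoly j * (C (2 * j + 2 : ℝ) + C (4 * j + 1 : ℝ) * X - X ^ 2)) := by
    apply Polynomial.eq_of_infinite_eval_eq
    apply (Set.Ioi_infinite (0 : ℝ)).mono
    intro x hx
    have hx : (0 : ℝ) < x := hx
    have hx3 : x + 3 ≠ 0 := by positivity
    have := det_friendship (j + 1) x hx
    rw [Set.mem_ofPred_eq, Matrix.eval_charpoly]
    apply mul_right_cancel₀ hx3
    rw [this]
    simp [basePoly]
    rw [mul_pow, pow_succ (x + 3)]
    ring
  have h : distCoeff (windmill (j + 1) 3) i =
      (-1 : ℝ) ^ (2 * (j + 1) + 1) * (friendshipDist (j + 1)).charpoly.coeff i := by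
    unfold distCoeff
    congr 2
    simp
    ring
  rw [friendshipNormCoeff, h, key]
  have e1 : (-1 : ℝ) ^ (2 * (j + 1) + 1 - 1) = 1 := by
    rw [Nat.add_sub_cancel, pow_mul]; simp
  have e2 : (-1 : ℝ) ^ (2 * (j + 1) + 1) = -1 := by
    rw [pow_succ, pow_mul]; simp
  rw [e1, e2]
  simp

/-! ### Sign changes and unimodality -/

/-- At most two sign changes, in the order `+ - +`, in the sequence of coefficients. -/
def TwoChanges (q : ℝ[X]) : Prop :=
  ∃ s t : ℕ, (∀ i < s, 0 ≤ q.coeff i) ∧ (∀ i, s ≤ i → i < t → q.coeff i ≤ 0) ∧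
    ∀ i, t ≤ i → 0 ≤ q.coeff i

/-- Away from the two places where the sign changes, `c * q_i + q_(i-1)` combines two numbers of
the same sign, so each sign change moves by at most one place. -/
theorem TwoChanges.mul_X_add_C {q : ℝ[X]} (h : TwoChanges q) {c : ℝ} (hc : 0 ≤ c) :
    TwoChanges (q * (X + C c)) := by
  obtain ⟨s, t, h1, h2, h3⟩ := h
  have h0 : (q * (X + C c)).coeff 0 = q.coeff 0 * c := by simp
  have hS : ∀ i, (q * (X + C c)).coeff (i + 1) = q.coeff i + q.coeff (i + 1) * c := by
    intro i
    rw [mul_add, coeff_add, coeff_mul_X, coeff_mul_C]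
  -- Only the signs at `s` and `t` are not determined by those of `q`.
  have hpos : ∀ i, (i < s ∨ t < i) → 0 ≤ (q * (X + C c)).coeff i := by
    rintro (_ | i) hi
    · rw [h0]
      rcases hi with hi | hi
      · exact mul_nonneg (h1 _ hi) hc
      · exact absurd hi (by omega)
    · rw [hS]
      rcases hi with hi | hi
      · exact add_nonneg (h1 _ (by omega)) (mul_nonneg (h1 _ hi) hc)
      · exact add_nonneg (h3 _ (by omega)) (mul_nonneg (h3 _ (by omega)) hc)
  have hneg : ∀ i, s < i → i < t → (q * (X + C c)).coeff i ≤ 0 := by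
    rintro (_ | i) hi hi'
    · omega
    · rw [hS]
      exact add_nonpos (h2 _ (by omega) (by omega))
        (mul_nonpos_of_nonpos_of_nonneg (h2 _ (by omega) (by omega)) hc)
  rcases le_or_gt t s with hts | hst
  · by_cases hs : 0 ≤ (q * (X + C c)).coeff s
    · refine ⟨s, s, fun i hi => hpos i (Or.inl hi), fun i _ _ => by omega, fun i hi => ?_⟩
      rcases hi.eq_or_lt with rfl | hi
      · exact hs
      · exact hpos i (Or.inr (by omega))
    · refine ⟨s, s + 1, fun i hi => hpos i (Or.inl hi), fun i hi hi' => ?_,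
        fun i hi => hpos i (Or.inr (by omega))⟩
      obtain rfl : i = s := by omega
      exact (not_le.1 hs).le
  · obtain ⟨s', hs', hs1, hs2⟩ : ∃ s', (s' = s ∨ s' = s + 1) ∧
        (∀ i < s', 0 ≤ (q * (X + C c)).coeff i) ∧
        ∀ i, s' ≤ i → i < t → (q * (X + C c)).coeff i ≤ 0 := by
      by_cases hs : 0 ≤ (q * (X + C c)).coeff s
      · refine ⟨s + 1, Or.inr rfl, fun i hi => ?_, fun i hi hi' => hneg i (by omega) hi'⟩
        rcases (Nat.lt_succ_iff.1 hi).eq_or_lt with rfl | hi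
        · exact hs
        · exact hpos i (Or.inl hi)
      · refine ⟨s, Or.inl rfl, fun i hi => hpos i (Or.inl hi), fun i hi hi' => ?_⟩
        rcases hi.eq_or_lt with rfl | hi
        · exact (not_le.1 hs).le
        · exact hneg i hi hi'
    by_cases ht : 0 ≤ (q * (X + C c)).coeff t
    · refine ⟨s', t, hs1, hs2, fun i hi => ?_⟩
      rcases hi.eq_or_lt with rfl | hi
      · exact ht
      · exact hpos i (Or.inr hi)
    · refine ⟨s', t + 1, hs1, fun i hi hi' => ?_, fun i hi => hpos i (Or.inr (by omega))⟩
      rcases (Nat.lt_succ_iff.1 hi').eq_or_lt with rfl | hi'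
      · exact (not_le.1 ht).le
      · exact hs2 i hi hi'

theorem TwoChanges.mul_pow {q : ℝ[X]} (h : TwoChanges q) {c : ℝ} (hc : 0 ≤ c) (n : ℕ) :
    TwoChanges (q * (X + C c) ^ n) := by
  induction n with
  | zero => simpa using h
  | succ n ih => rw [pow_succ, ← mul_assoc]; exact ih.mul_X_add_C hc

theorem TwoChanges.mul_basePoly {q : ℝ[X]} (h : TwoChanges q) (j : ℕ) :
    TwoChanges (q * basePoly j) := by
  rw [basePoly, ← mul_assoc]
  exact (h.mul_pow zero_le_one _).mul_pow (by norm_num) _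

/-- A negative coefficient at `n` places the second sign change beyond `n`. -/
theorem TwoChanges.oneChange {q : ℝ[X]} (h : TwoChanges q) {n : ℕ} (hn : q.coeff n < 0) :
    ∃ s, (∀ i < s, 0 ≤ q.coeff i) ∧ ∀ i, s ≤ i → i ≤ n → q.coeff i ≤ 0 := by
  obtain ⟨s, t, h1, h2, h3⟩ := h
  refine ⟨s, h1, fun i hi hi' => h2 i hi ?_⟩
  by_contra hti
  exact absurd (h3 n (by omega)) (not_le.2 hn)

theorem coeff_one_sub_X_mul_succ (q : ℝ[X]) (i : ℕ) :
    ((1 - X) * q).coeff (i + 1) = q.coeff (i + 1) - q.coeff i := by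
  rw [sub_mul, one_mul, coeff_sub, coeff_X_mul]

/-! ### Coefficients of `(X + 1) ^ (j + 1) * (X + 3) ^ j` -/

theorem basePoly_monic (j : ℕ) : (basePoly j).Monic :=
  ((monic_X_add_C 1).pow _).mul ((monic_X_add_C 3).pow _)

theorem basePoly_natDegree (j : ℕ) : (basePoly j).natDegree = 2 * j + 1 := by
  rw [basePoly, ((monic_X_add_C 1).pow _).natDegree_mul ((monic_X_add_C 3).pow _),
    (monic_X_add_C _).natDegree_pow, (monic_X_add_C _).natDegree_pow, natDegree_X_add_C,
    natDegree_X_add_C]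
  ring

theorem basePoly_coeff_top (j : ℕ) : (basePoly j).coeff (2 * j + 1) = 1 := by
  rw [← basePoly_natDegree]; exact basePoly_monic j

theorem basePoly_coeff_large (j i : ℕ) (h : 2 * j + 1 < i) : (basePoly j).coeff i = 0 :=
  coeff_eq_zero_of_natDegree_lt (by rwa [basePoly_natDegree])

theorem basePoly_ode (j : ℕ) :
    derivative (basePoly j) * (X ^ 2 + C 4 * X + C 3) =
      basePoly j * (C (2 * j + 1 : ℝ) * X + C (4 * j + 3 : ℝ)) := by
  rcases j with _ | j
  · simp [basePoly]
    have h3 : (C 3 : ℝ[X]) = 3 := rfl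
    have h4 : (C 4 : ℝ[X]) = 4 := rfl
    rw [h3, h4]
    ring
  · have h3 : (C 3 : ℝ[X]) = 3 := rfl
    have h4 : (C 4 : ℝ[X]) = 4 := rfl
    have h2 : (C 2 : ℝ[X]) = 2 := rfl
    simp only [basePoly, derivative_mul, C_add, C_mul, h3, h4, h2, C_1,
      map_natCast, Nat.add_sub_cancel, derivative_pow, derivative_X, derivative_add,
      derivative_one, derivative_ofNat]
    push_cast
    ring

theorem basePoly_coeff_zero_pos (j : ℕ) : 0 < (basePoly j).coeff 0 := by
  simp [basePoly, coeff_zero_eq_eval_zero]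

theorem basePoly_rec_one (j : ℕ) :
    3 * (basePoly j).coeff 1 = (4 * j + 3) * (basePoly j).coeff 0 := by
  have h := congrArg (fun q : ℝ[X] => q.coeff 0) (basePoly_ode j)
  simp [mul_coeff_zero, coeff_derivative] at h
  linarith

/-- The three-term recurrence of the coefficients, read off from `basePoly_ode`. -/
theorem basePoly_rec (j i : ℕ) :
    3 * ((i : ℝ) + 2) * (basePoly j).coeff (i + 2) =
      (4 * j - 1 - 4 * i) * (basePoly j).coeff (i + 1) +
      (2 * j + 1 - i) * (basePoly j).coeff i := by
  have h := congrArg (fun q : ℝ[X] => q.coeff (i + 1)) (basePoly_ode j)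
  simp only [mul_add, coeff_add, ← mul_assoc, coeff_mul_X, coeff_mul_C, pow_two,
    coeff_derivative] at h
  rcases i with _ | i
  · simp [coeff_derivative] at h ⊢
    linarith
  · simp only [coeff_mul_X, coeff_derivative] at h
    push_cast at h ⊢
    linarith

theorem basePoly_coeff_pos (j i : ℕ) (hi : i ≤ j + 1) : 0 < (basePoly j).coeff i := by
  induction i using Nat.strong_induction_on with
  | _ i ih =>
    rcases i with _ | _ | i
    · exact basePoly_coeff_zero_pos j
    · have h := basePoly_rec_one j
      have h0 := basePoly_coeff_zero_pos j
      have : 0 < (4 * (j : ℝ) + 3) * (basePoly j).coeff 0 := by positivity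
      simp only [zero_add]
      linarith
    · have h := basePoly_rec j i
      have h0 := ih i (by omega) (by omega)
      have h1 := ih (i + 1) (by omega) (by omega)
      have hij : (i : ℝ) + 1 ≤ j := by exact_mod_cast (by omega : i + 1 ≤ j)
      have : 0 < (4 * (j : ℝ) - 1 - 4 * i) * (basePoly j).coeff (i + 1) :=
        mul_pos (by linarith) h1
      have : 0 < (2 * (j : ℝ) + 1 - i) * (basePoly j).coeff i :=
        mul_pos (by linarith [(Nat.cast_nonneg j : (0 : ℝ) ≤ j)]) h0
      have h' : 0 < 3 * ((i : ℝ) + 2) * (basePoly j).coeff (i + 2) := by linarith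
      exact pos_of_mul_pos_right h' (by positivity)

/-- Unimodality of the coefficients of `basePoly j`. -/
theorem basePoly_unimodal (j : ℕ) :
    ∃ s, (∀ i, i + 1 < s → (basePoly j).coeff i ≤ (basePoly j).coeff (i + 1)) ∧
      ∀ i, s ≤ i + 1 → i ≤ 2 * j + 1 → (basePoly j).coeff (i + 1) ≤ (basePoly j).coeff i := by
  have hb : TwoChanges (1 - X : ℝ[X]) := by
    refine ⟨1, 2, ?_, ?_, ?_⟩
    · intro i hi
      obtain rfl : i = 0 := by omega
      simp
    · intro i hi hi'
      obtain rfl : i = 1 := by omega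
      simp [coeff_one]
    · intro i hi
      simp [coeff_one, coeff_X, show i ≠ 0 by omega, show 1 ≠ i by omega]
  have hn : ((1 - X) * basePoly j).coeff (2 * j + 2) < 0 := by
    rw [coeff_one_sub_X_mul_succ, basePoly_coeff_top, basePoly_coeff_large j _ (by omega)]
    norm_num
  obtain ⟨s, h1, h2⟩ := (hb.mul_basePoly j).oneChange hn
  refine ⟨s, fun i hi => ?_, fun i hi hi' => ?_⟩
  · have := h1 _ hi
    rw [coeff_one_sub_X_mul_succ] at this
    linarith
  · have := h2 _ hi (by omega)
    rw [coeff_one_sub_X_mul_succ] at this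
    linarith

/-! ### The normalized coefficients -/

theorem friendshipNormCoeff_add_two (j i : ℕ) :
    friendshipNormCoeff (j + 1) (i + 2) = (2 * j + 2) * (basePoly j).coeff (i + 2) +
      (4 * j + 1) * (basePoly j).coeff (i + 1) - (basePoly j).coeff i := by
  rw [friendshipNormCoeff_eq]
  simp only [mul_sub, mul_add, coeff_sub, coeff_add, ← mul_assoc, coeff_mul_X, coeff_mul_C,
    coeff_mul_X_pow]
  ring

/-- Unimodality of the normalized coefficients, phrased so that the descent is known to last up
to the index `n = 2k+1`. -/
theorem friendshipNormCoeff_unimodal (j : ℕ) (hj : 1 ≤ j) :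
    ∃ s, (∀ i, i + 1 < s →
        friendshipNormCoeff (j + 1) i ≤ friendshipNormCoeff (j + 1) (i + 1)) ∧
      ∀ i, s ≤ i + 1 → i ≤ 2 * j + 2 →
        friendshipNormCoeff (j + 1) (i + 1) ≤ friendshipNormCoeff (j + 1) i := by
  have hj' : (1 : ℝ) ≤ j := by exact_mod_cast hj
  set q : ℝ[X] := C (2 * j + 2 : ℝ) + C (4 * j + 1 : ℝ) * X - X ^ 2 with hq
  have hb : TwoChanges ((1 - X) * q) := by
    have e : (1 - X) * q = C (2 * j + 2 : ℝ) + C (2 * j - 1 : ℝ) * X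
        + C (-(4 * j + 2) : ℝ) * X ^ 2 + C 1 * X ^ 3 := by
      rw [hq]
      have h4 : (C 4 : ℝ[X]) = 4 := rfl
      have h2 : (C 2 : ℝ[X]) = 2 := rfl
      simp only [C_add, C_mul, C_sub, C_neg, C_1, h4, h2]
      ring
    rw [e]
    refine ⟨2, 3, ?_, ?_, ?_⟩
    · intro i hi
      interval_cases i
      · simp only [coeff_add, coeff_C_mul, coeff_C, coeff_X, coeff_X_pow]
        norm_num
        linarith
      · simp only [coeff_add, coeff_C_mul, coeff_C, coeff_X, coeff_X_pow]
        norm_num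
        linarith
    · intro i hi hi'
      obtain rfl : i = 2 := by omega
      simp only [coeff_add, coeff_C_mul, coeff_C, coeff_X, coeff_X_pow]
      norm_num
      linarith
    · intro i hi
      simp only [coeff_add, coeff_C_mul, coeff_C, coeff_X, coeff_X_pow, show i ≠ 0 by omega,
        show 1 ≠ i by omega, show i ≠ 2 by omega, if_false]
      split_ifs <;> norm_num
  have hfun : ∀ i, ((1 - X) * q * basePoly j).coeff (i + 1) =
      friendshipNormCoeff (j + 1) (i + 1) - friendshipNormCoeff (j + 1) i := by
    intro i
    rw [mul_assoc, coeff_one_sub_X_mul_succ, mul_comm q, friendshipNormCoeff_eq,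
      friendshipNormCoeff_eq]
  have hn : ((1 - X) * q * basePoly j).coeff (2 * j + 2 + 1) < 0 := by
    -- The value at `n - 1` is the trace of the distance matrix up to sign, hence zero.
    rw [hfun, show 2 * j + 2 + 1 = (2 * j + 1) + 2 by ring, friendshipNormCoeff_add_two,
      friendshipNormCoeff_add_two, basePoly_coeff_top,
      basePoly_coeff_large j (2 * j + 1 + 2) (by omega),
      basePoly_coeff_large j (2 * j + 1 + 1) (by omega)]
    have h := basePoly_rec j (2 * j)
    rw [basePoly_coeff_large j _ (by omega), basePoly_coeff_top] at h
    push_cast at h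
    linarith
  obtain ⟨s, h1, h2⟩ := (hb.mul_basePoly j).oneChange hn
  refine ⟨s, fun i hi => ?_, fun i hi hi' => ?_⟩
  · have := h1 _ hi
    rw [hfun] at this
    linarith
  · have := h2 _ hi (by omega)
    rw [hfun] at this
    linarith

/-- The difference at `n + 3`, with the coefficient of index `n + 3` eliminated by
`basePoly_rec`. -/
theorem friendshipNormCoeff_sub (j n : ℕ) :
    3 * ((n : ℝ) + 3) * (friendshipNormCoeff (j + 1) (n + 3) - friendshipNormCoeff (j + 1) (n + 2))
      = ((2 * j + 2) * (4 * j - 5 - 4 * n) + 3 * (n + 3) * (2 * j - 1)) * (basePoly j).coeff (n + 2)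
      + ((2 * j + 2) * (2 * j - n) - 3 * (n + 3) * (4 * j + 2)) * (basePoly j).coeff (n + 1)
      + 3 * (n + 3) * (basePoly j).coeff n := by
  have h := basePoly_rec j (n + 1)
  rw [show n + 3 = (n + 1) + 2 by ring, friendshipNormCoeff_add_two, friendshipNormCoeff_add_two]
  push_cast at h
  simp only [show n + 1 + 2 = n + 3 by ring, show n + 1 + 1 = n + 2 by ring] at h ⊢
  linear_combination (2 * (j : ℝ) + 2) * h

/-- Strict increase at one step just below `3k/4`. -/
theorem friendshipNormCoeff_lt_succ (j n : ℕ) (hn : 8 * n + 24 ≤ 6 * j) :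
    friendshipNormCoeff (j + 1) (n + 2) < friendshipNormCoeff (j + 1) (n + 3) := by
  obtain ⟨s, h1, h2⟩ := basePoly_unimodal j
  have p0 := basePoly_coeff_pos j n (by omega)
  have p1 := basePoly_coeff_pos j (n + 1) (by omega)
  have p2 := basePoly_coeff_pos j (n + 2) (by omega)
  have hn' : 8 * (n : ℝ) + 24 ≤ 6 * j := by exact_mod_cast hn
  have hn0 : (0 : ℝ) ≤ n := n.cast_nonneg
  have hmono : (basePoly j).coeff (n + 1) ≤ (basePoly j).coeff (n + 2) := by
    rcases lt_or_ge (n + 2) s with hs | hs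
    · exact h1 (n + 1) hs
    · -- Two consecutive descents contradict the recurrence, as `8 * n + 14 < 6 * j`.
      have d1 := h2 (n + 1) hs (by omega)
      have d2 := h2 (n + 2) (by omega) (by omega)
      have h := basePoly_rec j (n + 1)
      push_cast at h
      simp only [show n + 1 + 2 = n + 3 by ring, show n + 1 + 1 = n + 2 by ring] at h d1 d2
      exfalso
      have := mul_le_mul_of_nonneg_left d1 (by linarith : (0 : ℝ) ≤ 2 * j + 1 - (n + 1))
      have := mul_le_mul_of_nonneg_left d2 (by linarith : (0 : ℝ) ≤ 3 * (n + 1 + 2))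
      have := mul_pos (by linarith : (0 : ℝ) < 6 * j - 14 - 8 * n) p2
      linarith
  have h := friendshipNormCoeff_sub j n
  have c2 : (0 : ℝ) ≤ (2 * j + 2) * (4 * j - 5 - 4 * n) + 3 * (n + 3) * (2 * j - 1) :=
    add_nonneg (mul_nonneg (by linarith) (by linarith)) (mul_nonneg (by linarith) (by linarith))
  have t2 := mul_le_mul_of_nonneg_left hmono c2
  have t1 : (0 : ℝ) < ((2 * j + 2) * (6 * j - 14 - 8 * n) - 3 * (n + 3)) *
      (basePoly j).coeff (n + 1) := mul_pos (by nlinarith) p1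
  have t0 : 0 < 3 * ((n : ℝ) + 3) * (basePoly j).coeff n := by positivity
  have : 0 < 3 * ((n : ℝ) + 3) *
      (friendshipNormCoeff (j + 1) (n + 3) - friendshipNormCoeff (j + 1) (n + 2)) := by
    rw [h]
    linarith
  exact sub_pos.1 (pos_of_mul_pos_right this (by positivity))

/-- Strict decrease at one step just above `3k/4`. -/
theorem friendshipNormCoeff_succ_lt (j n : ℕ) (hn : 6 * j ≤ 8 * n) (hnj : n + 1 ≤ j) :
    friendshipNormCoeff (j + 1) (n + 3) < friendshipNormCoeff (j + 1) (n + 2) := by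
  obtain ⟨s, h1, h2⟩ := basePoly_unimodal j
  have p0 := basePoly_coeff_pos j n (by omega)
  have p1 := basePoly_coeff_pos j (n + 1) (by omega)
  have p2 := basePoly_coeff_pos j (n + 2) (by omega)
  have hn' : 6 * (j : ℝ) ≤ 8 * n := by exact_mod_cast hn
  have hnj' : (n : ℝ) + 1 ≤ j := by exact_mod_cast hnj
  have hn0 : (0 : ℝ) ≤ n := n.cast_nonneg
  have hr := basePoly_rec j n
  have hmono : (basePoly j).coeff (n + 2) ≤ (basePoly j).coeff (n + 1) := by
    rcases le_or_gt s (n + 2) with hs | hs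
    · exact h2 (n + 1) hs (by omega)
    · -- Two consecutive ascents contradict the recurrence, as `6 * j < 8 * n + 6`.
      have d1 := h1 (n + 1) hs
      have d2 := h1 n (by omega)
      simp only [show n + 1 + 1 = n + 2 by ring] at d1
      exfalso
      have := mul_le_mul_of_nonneg_left d2 (by linarith : (0 : ℝ) ≤ 2 * j + 1 - n)
      have := mul_le_mul_of_nonneg_left d1 (by linarith : (0 : ℝ) ≤ 3 * (n + 2))
      have := mul_pos (by linarith : (0 : ℝ) < 8 * n + 6 - 6 * j) p1
      linarith
  -- A crude bound suffices, since `p_n` enters the difference without a factor of order `j`.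
  have h3 : (basePoly j).coeff n ≤ 3 * (basePoly j).coeff (n + 1) := by
    have a1 := mul_le_mul_of_nonneg_left hmono (by linarith : (0 : ℝ) ≤ 3 * (n + 2))
    have a2 := mul_nonneg (by linarith : (0 : ℝ) ≤ 4 * j - 1 - 4 * n) p1.le
    have a3 := mul_nonneg (by linarith : (0 : ℝ) ≤ 3 * (2 * j + 1 - n) - 3 * (n + 2)) p1.le
    have : (2 * (j : ℝ) + 1 - n) * (basePoly j).coeff n ≤
        (2 * (j : ℝ) + 1 - n) * (3 * (basePoly j).coeff (n + 1)) := by linarith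
    exact le_of_mul_le_mul_left this (by linarith)
  have h := friendshipNormCoeff_sub j n
  have c2 : (0 : ℝ) ≤ (2 * j + 2) * (4 * j - 5 - 4 * n) + 3 * (n + 3) * (2 * j - 1) := by
    nlinarith
  have t2 := mul_le_mul_of_nonneg_left hmono c2
  have t0 := mul_le_mul_of_nonneg_left h3 (by linarith : (0 : ℝ) ≤ 3 * (n + 3))
  have t1 : (0 : ℝ) < ((2 * j + 2) * (8 * n + 14 - 6 * j) - 6 * (n + 3)) *
      (basePoly j).coeff (n + 1) := mul_pos (by nlinarith) p1
  have : 0 < 3 * ((n : ℝ) + 3) *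
      (friendshipNormCoeff (j + 1) (n + 2) - friendshipNormCoeff (j + 1) (n + 3)) := by
    linarith
  exact sub_pos.1 (pos_of_mul_pos_right this (by positivity))

theorem le_of_steps (f : ℕ → ℝ) {a b : ℕ} (hab : a ≤ b)
    (h : ∀ i, a ≤ i → i < b → f i ≤ f (i + 1)) : f a ≤ f b := by
  induction b, hab using Nat.le_induction with
  | base => exact le_rfl
  | succ b hb ih =>
    exact (ih fun i hi hi' => h i hi (by omega)).trans (h b hb (by omega))

/-- For every `k ≥ 2`, the sequence
`(-1)^(n-1) c_0(F_(2k+1)), …, (-1)^(n-1) c_(n-2)(F_(2k+1))` (with `n = 2k+1`) is unimodal,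
and as `k → ∞` every peak of this sequence occurs at `3k/4 + O(log k)`. -/
theorem friendship_distCoeff_unimodal_peak :
    (∀ k : ℕ, 2 ≤ k →
      ∃ m : ℕ, m ≤ 2 * k + 1 - 2 ∧
        (∀ i : ℕ, i < m → friendshipNormCoeff k i ≤ friendshipNormCoeff k (i + 1)) ∧
        (∀ i : ℕ, m ≤ i → i < 2 * k + 1 - 2 →
          friendshipNormCoeff k (i + 1) ≤ friendshipNormCoeff k i)) ∧
    ∃ C : ℝ, 0 < C ∧ ∃ K : ℕ, 2 ≤ K ∧ ∀ k : ℕ, K ≤ k →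
      ∀ m : ℕ, m ≤ 2 * k + 1 - 2 →
        (∀ i : ℕ, i ≤ 2 * k + 1 - 2 → friendshipNormCoeff k i ≤ friendshipNormCoeff k m) →
        |(m : ℝ) - 3 * (k : ℝ) / 4| ≤ C * Real.log k := by
  constructor
  · intro k hk
    obtain ⟨j, rfl⟩ : ∃ j, k = j + 1 := ⟨k - 1, by omega⟩
    obtain ⟨s, h1, h2⟩ := friendshipNormCoeff_unimodal j (by omega)
    refine ⟨min (s - 1) (2 * (j + 1) + 1 - 2), min_le_right _ _, fun i hi => ?_,
      fun i hi hi' => ?_⟩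
    · exact h1 i (by omega)
    · exact h2 i (by omega) (by omega)
  · refine ⟨10, by norm_num, 100, by norm_num, fun k hk m hm hmax => ?_⟩
    obtain ⟨j, rfl⟩ : ∃ j, k = j + 1 := ⟨k - 1, by omega⟩
    obtain ⟨s, h1, h2⟩ := friendshipNormCoeff_unimodal j (by omega)
    have hlo : 3 * j / 4 ≤ m := by
      obtain ⟨n, hn⟩ : ∃ n, 3 * j / 4 = n + 3 := ⟨3 * j / 4 - 3, by omega⟩
      have hlt := friendshipNormCoeff_lt_succ j n (by omega)
      by_contra! hmn
      have hs : n + 3 < s := by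
        by_contra! hs
        exact absurd (h2 (n + 2) hs (by omega)) (not_le.2 hlt)
      have hle : friendshipNormCoeff (j + 1) m ≤ friendshipNormCoeff (j + 1) (n + 2) :=
        le_of_steps _ (by omega) fun i _ hi => h1 i (by omega)
      exact absurd (hmax (n + 3) (by omega)) (not_le.2 (hle.trans_lt hlt))
    have hhi : m ≤ 3 * j / 4 + 3 := by
      obtain ⟨n, hn⟩ : ∃ n, n = 3 * j / 4 + 1 := ⟨_, rfl⟩
      have hlt := friendshipNormCoeff_succ_lt j n (by omega) (by omega)
      by_contra! hmn
      have hs : s ≤ n + 3 := by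
        by_contra! hs
        exact absurd (h1 (n + 2) hs) (not_le.2 hlt)
      have hle : -friendshipNormCoeff (j + 1) (n + 3) ≤ -friendshipNormCoeff (j + 1) m :=
        le_of_steps (fun i => -friendshipNormCoeff (j + 1) i) (by omega)
          fun i hi hi' => neg_le_neg (h2 i (by omega) (by omega))
      exact absurd (hmax (n + 2) (by omega)) (not_le.2 ((neg_le_neg_iff.1 hle).trans_lt hlt))
    have hlog : 1 ≤ Real.log ((j + 1 : ℕ) : ℝ) := by
      rw [Real.le_log_iff_exp_le (by positivity)]
      have : (100 : ℝ) ≤ ((j + 1 : ℕ) : ℝ) := by exact_mod_cast hk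
      linarith [Real.exp_one_lt_d9]
    have a1 : 3 * (j : ℝ) ≤ 4 * m + 4 := by exact_mod_cast (by omega : 3 * j ≤ 4 * m + 4)
    have a2 : 4 * (m : ℝ) ≤ 3 * j + 12 := by exact_mod_cast (by omega : 4 * m ≤ 3 * j + 12)
    have : |(m : ℝ) - 3 * ((j + 1 : ℕ) : ℝ) / 4| ≤ 10 := by
      push_cast
      rw [abs_le]
      constructor <;> linarith
    linarith
end
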